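/- For every ε > 0 there exists L > 0 with the following property. Let X and Y be independent finitely supported random variables taking values in G = 𝔽₂ⁿ. Then there exists a subspace V ⊆ G with H[𝐔_V] ≤ L (H[X] + H[Y]) such that H[π_V(X) + π_V(Y)] ≥ H[π_V(X)] + H[π_V(Y)] − ε (H[X] + H[Y]). -/

import Mathlib

open Real Pointwise

noncomputable section

abbrev Fvec (n : ℕ) : Type := Fin n → ZMod 2

/-- Shannon entropy (natural log) of a finitely supported distribution. -/
def ent {A : Type*} (p : A → ℝ) : ℝ := ∑ᶠ a, Real.negMulLog (p a)

/-- `p` is a (finitely supported) probability distribution. -/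
def IsDist {A : Type*} (p : A → ℝ) : Prop := (∀ a, 0 ≤ p a) ∧ ∑ᶠ a, p a = 1

/-- Pushforward of a distribution along a map: the distribution of `f(X)` for `X ∼ p`. -/
def push {A B : Type*} (f : A → B) (p : A → ℝ) : B → ℝ := fun b => ∑ᶠ a ∈ f ⁻¹' {b}, p a

/-- Joint distribution of a pair of independent random variables. -/
def prodDist {A B : Type*} (p : A → ℝ) (q : B → ℝ) : A × B → ℝ := fun z => p z.1 * q z.2

/-- Distribution of `X + Y` for independent `X ∼ p`, `Y ∼ q`. -/
def conv {A : Type*} [AddGroup A] (p q : A → ℝ) : A → ℝ := fun z => ∑ᶠ x, p x * q (z - x)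

/-- The distribution of `X` conditioned on `U = b`, where `r` is the joint distribution of `(X, U)`. -/
def fiber {A B : Type*} (r : A × B → ℝ) (b : B) : A → ℝ := fun a => r (a, b) / push Prod.snd r b

/-- Conditional entropy `H[X | U]` of a joint distribution `r` of `(X, U)`. -/
def condEnt {A B : Type*} (r : A × B → ℝ) : ℝ := ∑ᶠ b, push Prod.snd r b * ent (fiber r b)

/-- Doubling mass `s[X ; Y]` (of independent copies with distributions `p`, `q`). -/
def sDouble {A : Type*} [AddGroup A] (p q : A → ℝ) : ℝ := ent p + ent q - ent (conv p q)

/-- Conditional doubling mass `s[X | U ; Y | W] = 𝔼_{u ∼ U, w ∼ W} s[X_u ; Y_w]`,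
where `r1`, `r2` are the joint distributions of `(X, U)` and `(Y, W)`. -/
def sCond {A U W : Type*} [AddGroup A] (r1 : A × U → ℝ) (r2 : A × W → ℝ) : ℝ :=
  ∑ᶠ u, ∑ᶠ w, push Prod.snd r1 u * push Prod.snd r2 w * sDouble (fiber r1 u) (fiber r2 w)

/-- Conditional mutual information `I[A : B | S]` of a joint distribution of `(A, B, S)`. -/
def condMI {A B S : Type*} (r : A × B × S → ℝ) : ℝ :=
  ent (push (fun z => (z.1, z.2.2)) r) + ent (push (fun z => z.2) r)
    - ent r - ent (push (fun z => z.2.2) r)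

/-- Uniform distribution on a set. -/
def unifOn {A : Type*} (s : Set A) : A → ℝ := s.indicator fun _ => (Nat.card s : ℝ)⁻¹

/-- Entropic Ruzsa distance `d[X ; Y]`. -/
def dRuzsa {A : Type*} [AddGroup A] (p q : A → ℝ) : ℝ := ent (conv p q) - ent p / 2 - ent q / 2

/-- Joint distribution of `(X, X + Y)` for independent `X ∼ p`, `Y ∼ q`. -/
def jointSum {A : Type*} [AddGroup A] (p q : A → ℝ) : A × A → ℝ :=
  push (fun z : A × A => (z.1, z.1 + z.2)) (prodDist p q)

/-- Joint distribution of `(X, π_V(X))`. -/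
def selfProj {n : ℕ} (V : Submodule (ZMod 2) (Fvec n)) (p : Fvec n → ℝ) :
    Fvec n × (Fvec n ⧸ V) → ℝ := push (fun x => (x, V.mkQ x)) p

/-- Joint distribution of independent `(X₁, X₂, Y₁, Y₂)` with `X₁, X₂ ∼ p` and `Y₁, Y₂ ∼ q`. -/
def quad {A : Type*} (p q : A → ℝ) : A × A × A × A → ℝ :=
  fun z => p z.1 * p z.2.1 * q z.2.2.1 * q z.2.2.2

/-- Distribution of `X₁ + ⋯ + X_k` for independent `Xᵢ ∼ p i`. -/
def indepSum {A : Type*} [AddCommGroup A] (k : ℕ) (p : Fin k → A → ℝ) : A → ℝ :=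
  push (fun x : Fin k → A => ∑ i, x i) (fun x => ∏ i, p i (x i))

/-- Statement `A(η, L, c)` from the paper. -/
def StA (η L c : ℝ) : Prop :=
  ∀ (n : ℕ) (p q : Fvec n → ℝ), IsDist p → IsDist q →
    ent (conv p q) ≤ (1 - η) * (ent p + ent q) →
    ∃ V : Submodule (ZMod 2) (Fvec n),
      ent (unifOn (V : Set (Fvec n))) ≤ L * (ent p + ent q) ∧
      ent (push V.mkQ p) + ent (push V.mkQ q) ≤ (1 - c) * (ent p + ent q)

/-- Statement `B(η, ε, L)` from the paper. -/
def StB (η ε L : ℝ) : Prop :=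
  ∀ (n : ℕ) (p q : Fvec n → ℝ), IsDist p → IsDist q →
    ∃ V : Submodule (ZMod 2) (Fvec n),
      ent (unifOn (V : Set (Fvec n))) ≤ L * (ent p + ent q) ∧
      ent (conv (push V.mkQ p) (push V.mkQ q)) ≥
        (1 - η) * (ent (push V.mkQ p) + ent (push V.mkQ q)) - ε * (ent p + ent q)

/-!
Energy decrement: choose `V` minimising the sum of the entropies of the images in `G ⧸ V` of
`1, 2, 4, …, 2 ^ N` copies of `X + Y`, plus `δ log |V|`. Comparing `V` with `0` bounds `|V|`. It
suffices that `S = π_V(X + Y)` satisfies `H[S + S'] ≥ (2 - ε) H[S]` for an independent copy `S'`,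
because `H[S + S'] ≤ 3 H[S] - H[π_V(X)] - H[π_V(Y)]`.

Otherwise replace `S` by `S + S'`, or by `S` conditioned on `S + S'`, as long as this lowers the
ratio `σ = H[S + S'] / H[S]` by `δ`; as `σ ≥ 1`, there are at most `1 / δ` such steps. When neither
step helps, the fibring inequality for `S` is nearly an equality. In characteristic two the entropic
Balog–Szemerédi–Gowers inequality then shows that the sum of two independent copies of `S`
conditioned on `S + S'` has, on average over the conditioning, doubling constant close to one. By
the entropic Freiman–Ruzsa theorem it is concentrated near cosets of a subspace, and enlarging `V`
by this subspace would lower the minimised quantity.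
-/

section FiniteDistributions

variable {Ω Ω' α β : Type*} {p : Ω → ℝ} {q : Ω' → ℝ}

theorem IsDist.mem_stdSimplex [Fintype Ω] (hp : IsDist p) : p ∈ stdSimplex ℝ Ω :=
  ⟨hp.1, by rw [← finsum_eq_sum_of_fintype]; exact hp.2⟩

theorem exists_le_of_sum_mul_le [Fintype Ω] (hp : p ∈ stdSimplex ℝ Ω) {g : Ω → ℝ} {c : ℝ}
    (h : ∑ ω, p ω * g ω ≤ c) : ∃ ω, p ω ≠ 0 ∧ g ω ≤ c := by
  by_contra! hlt
  obtain ⟨ω₀, hω₀⟩ : ∃ ω, p ω ≠ 0 := by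
    by_contra! hzero
    simpa [hzero] using hp.2
  refine h.not_gt ?_
  rw [← one_mul c, ← hp.2, Finset.sum_mul]
  refine Finset.sum_lt_sum (fun ω _ ↦ ?_)
    ⟨ω₀, Finset.mem_univ _, mul_lt_mul_of_pos_left (hlt ω₀ hω₀) ((hp.1 ω₀).lt_of_ne' hω₀)⟩
  obtain hω | hω := eq_or_ne (p ω) 0
  · simp [hω]
  · exact mul_le_mul_of_nonneg_left (hlt ω hω).le (hp.1 ω)

theorem ent_eq_sum [Fintype Ω] (p : Ω → ℝ) : ent p = ∑ ω, negMulLog (p ω) :=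
  finsum_eq_sum_of_fintype _

open scoped Classical in
theorem push_apply [Fintype Ω] (f : Ω → α) (p : Ω → ℝ) (a : α) :
    push f p a = ∑ ω, if f ω = a then p ω else 0 := by
  rw [push, finsum_mem_def, finsum_eq_sum_of_fintype]
  simp only [Set.indicator_apply, Set.mem_preimage, Set.mem_singleton_iff]

theorem exists_of_push_ne_zero [Finite Ω] {f : Ω → α} {a : α} (h : push f p a ≠ 0) :
    ∃ ω, p ω ≠ 0 ∧ f ω = a := by
  classical
  have := Fintype.ofFinite Ω
  rw [push_apply] at h
  obtain ⟨ω, -, hω⟩ := Finset.exists_ne_zero_of_sum_ne_zero h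
  grind

theorem sum_push_mul_of_support [Fintype Ω] {f : Ω → α} {S : Finset α}
    (hS : ∀ ω, p ω ≠ 0 → f ω ∈ S) (g : α → ℝ) :
    ∑ a ∈ S, push f p a * g a = ∑ ω, p ω * g (f ω) := by
  classical
  simp only [push_apply, Finset.sum_mul, ite_mul, zero_mul]
  rw [Finset.sum_comm]
  refine Finset.sum_congr rfl fun ω _ ↦ ?_
  rw [Finset.sum_ite_eq]
  grind

theorem sum_push_mul [Fintype Ω] [Fintype α] (f : Ω → α) (p : Ω → ℝ) (g : α → ℝ) :
    ∑ a, push f p a * g a = ∑ ω, p ω * g (f ω) :=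
  sum_push_mul_of_support (fun _ _ ↦ Finset.mem_univ _) g

theorem finsum_push_mul [Fintype Ω] (f : Ω → α) (p : Ω → ℝ) (g : α → ℝ) :
    ∑ᶠ a, push f p a * g a = ∑ ω, p ω * g (f ω) := by
  classical
  rw [← sum_push_mul_of_support (S := Finset.univ.image f) (by simp) g]
  refine finsum_eq_sum_of_support_subset _ fun a ha ↦ ?_
  obtain ⟨ω, -, rfl⟩ := exists_of_push_ne_zero (left_ne_zero_of_mul ha)
  simp

theorem push_push [Finite Ω] (g : α → β) (f : Ω → α) (p : Ω → ℝ) :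
    push g (push f p) = push (g ∘ f) p := by
  classical
  have := Fintype.ofFinite Ω
  ext b
  have h := finsum_push_mul f p fun a ↦ if g a = b then 1 else 0
  simp only [mul_ite, mul_one, mul_zero] at h
  rw [push_apply (g ∘ f), push, finsum_mem_def]
  simpa only [Set.indicator_apply, Set.mem_preimage, Set.mem_singleton_iff,
    Function.comp_apply] using h

theorem push_id [Finite Ω] (p : Ω → ℝ) : push id p = p := by
  classical
  have := Fintype.ofFinite Ω
  ext ω
  simp [push_apply]

theorem push_nonneg [Fintype Ω] (hp : p ∈ stdSimplex ℝ Ω) (f : Ω → α) (a : α) : 0 ≤ push f p a :=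
  finsum_nonneg fun ω ↦ finsum_nonneg fun _ ↦ hp.1 ω

theorem push_mono [Fintype Ω] (hp : p ∈ stdSimplex ℝ Ω) {f : Ω → α} {g : Ω → β} {a : α} {b : β}
    (h : ∀ ω, p ω ≠ 0 → f ω = a → g ω = b) : push f p a ≤ push g p b := by
  classical
  simp only [push_apply]
  refine Finset.sum_le_sum fun ω _ ↦ ?_
  have := hp.1 ω
  grind

theorem le_push [Fintype Ω] (hp : p ∈ stdSimplex ℝ Ω) (f : Ω → α) (ω : Ω) :
    p ω ≤ push f p (f ω) := by
  calc p ω = push id p ω := by rw [push_id]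
    _ ≤ push f p (f ω) := push_mono hp fun ω' _ h ↦ by rw [← h, id]

theorem push_pos [Fintype Ω] (hp : p ∈ stdSimplex ℝ Ω) (f : Ω → α) {ω : Ω} (hω : p ω ≠ 0) :
    0 < push f p (f ω) :=
  ((hp.1 ω).lt_of_ne' hω).trans_le (le_push hp f ω)

theorem push_mem_stdSimplex [Fintype Ω] [Fintype α] (hp : p ∈ stdSimplex ℝ Ω) (f : Ω → α) :
    push f p ∈ stdSimplex ℝ α :=
  ⟨push_nonneg hp f, by simpa [hp.2] using sum_push_mul f p fun _ ↦ 1⟩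

theorem push_le_one [Fintype Ω] (hp : p ∈ stdSimplex ℝ Ω) (f : Ω → α) (a : α) : push f p a ≤ 1 := by
  classical
  rw [push_apply, ← hp.2]
  refine Finset.sum_le_sum fun ω _ ↦ ?_
  have := hp.1 ω
  grind

theorem sum_prodDist_mul [Fintype Ω] [Fintype Ω'] (p : Ω → ℝ) (q : Ω' → ℝ) (g : Ω × Ω' → ℝ) :
    ∑ x, prodDist p q x * g x = ∑ ω, p ω * ∑ ω', q ω' * g (ω, ω') := by
  simp only [Fintype.sum_prod_type, prodDist, mul_assoc, Finset.mul_sum]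

theorem prodDist_mem_stdSimplex [Fintype Ω] [Fintype Ω'] (hp : p ∈ stdSimplex ℝ Ω)
    (hq : q ∈ stdSimplex ℝ Ω') : prodDist p q ∈ stdSimplex ℝ (Ω × Ω') :=
  ⟨fun x ↦ mul_nonneg (hp.1 _) (hq.1 _), by
    simpa [hp.2, hq.2] using sum_prodDist_mul p q fun _ ↦ 1⟩

theorem push_prodMap_prodDist [Finite Ω] [Finite Ω'] (f : Ω → α) (g : Ω' → β) (p : Ω → ℝ)
    (q : Ω' → ℝ) : push (Prod.map f g) (prodDist p q) = prodDist (push f p) (push g q) := by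
  classical
  have := Fintype.ofFinite Ω
  have := Fintype.ofFinite Ω'
  ext ⟨a, b⟩
  simp only [push_apply, prodDist, Fintype.sum_prod_type, Finset.sum_mul_sum, Prod.map,
    Prod.mk.injEq, ite_and, mul_ite, ite_mul, mul_zero, zero_mul]
  grind

theorem push_fst_prodDist [Fintype Ω'] [Finite Ω] (p : Ω → ℝ) (hq : q ∈ stdSimplex ℝ Ω') :
    push Prod.fst (prodDist p q) = p := by
  classical
  have := Fintype.ofFinite Ω
  ext ω
  simp [push_apply, prodDist, Fintype.sum_prod_type, ← Finset.mul_sum, hq.2]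

theorem conv_eq_push {G : Type*} [AddCommGroup G] [Finite G] (z w : G → ℝ) :
    conv z w = push (fun x ↦ x.1 + x.2) (prodDist z w) := by
  classical
  have := Fintype.ofFinite G
  ext g
  simp only [push_apply, conv, prodDist, Fintype.sum_prod_type, finsum_eq_sum_of_fintype,
    ← eq_sub_iff_add_eq', Finset.sum_ite_eq', Finset.mem_univ, if_true]

/-- The distribution `p` conditioned on the event `B = b`; it is identically `0` when that event
has probability zero. -/
def condOn (p : Ω → ℝ) (B : Ω → β) (b : β) (ω : Ω) : ℝ := (B ⁻¹' {b}).indicator p ω / push B p b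

theorem condOn_ne_zero {B : Ω → β} {b : β} {ω : Ω} (h : condOn p B b ω ≠ 0) :
    p ω ≠ 0 ∧ B ω = b := by
  classical
  simp only [condOn, Set.indicator_apply, Set.mem_preimage, Set.mem_singleton_iff] at h
  grind

theorem push_condOn [Finite Ω] (f : Ω → α) (p : Ω → ℝ) (B : Ω → β) (a : α) (b : β) :
    push f (condOn p B b) a = push (fun ω ↦ (f ω, B ω)) p (a, b) / push B p b := by
  classical
  have := Fintype.ofFinite Ω
  simp only [push_apply f, push_apply fun ω ↦ (f ω, B ω), condOn, Set.indicator_apply,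
    Set.mem_preimage, Set.mem_singleton_iff, Finset.sum_div, Prod.mk.injEq]
  grind

theorem condOn_mem_stdSimplex [Fintype Ω] (hp : p ∈ stdSimplex ℝ Ω) (B : Ω → β) {ω : Ω}
    (hω : p ω ≠ 0) : condOn p B (B ω) ∈ stdSimplex ℝ Ω := by
  classical
  refine ⟨fun ω' ↦ div_nonneg (Set.indicator_nonneg (fun _ _ ↦ hp.1 _) _) (push_nonneg hp B _), ?_⟩
  simp only [condOn, ← Finset.sum_div, Set.indicator_apply, Set.mem_preimage,
    Set.mem_singleton_iff, ← push_apply]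
  exact div_self (push_pos hp B hω).ne'

theorem sum_condOn_mul [Fintype Ω] (hp : p ∈ stdSimplex ℝ Ω) (B : Ω → β) (g : Ω → ℝ) :
    ∑ ω, p ω * ∑ ω', condOn p B (B ω) ω' * g ω' = ∑ ω, p ω * g ω := by
  classical
  simp only [Finset.mul_sum]
  rw [Finset.sum_comm]
  refine Finset.sum_congr rfl fun ω' _ ↦ ?_
  obtain hω' | hω' := eq_or_ne (p ω') 0
  · simp [condOn, Set.indicator_apply, hω']
  calc ∑ ω, p ω * (condOn p B (B ω) ω' * g ω')
      = ∑ ω, (if B ω = B ω' then p ω else 0) * (p ω' * g ω' / push B p (B ω')) := by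
        refine Finset.sum_congr rfl fun ω _ ↦ ?_
        simp only [condOn, Set.indicator_apply, Set.mem_preimage, Set.mem_singleton_iff,
          @eq_comm _ (B ω')]
        split_ifs with h
        · rw [h]; ring
        · simp
    _ = p ω' * g ω' := by
        rw [← Finset.sum_mul, ← push_apply, mul_div_cancel₀ _ (push_pos hp B hω').ne']

theorem condOn_prodDist [Finite Ω] [Finite Ω'] (p : Ω → ℝ) (q : Ω' → ℝ) (B : Ω → α) (C : Ω' → β)
    (a : α) (b : β) :
    condOn (prodDist p q) (Prod.map B C) (a, b) = prodDist (condOn p B a) (condOn q C b) := by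
  classical
  ext x
  simp only [condOn, push_prodMap_prodDist, prodDist, Set.indicator_apply, Set.mem_preimage,
    Set.mem_singleton_iff, Prod.map, Prod.mk.injEq]
  grind

end FiniteDistributions

/-- The entropy `H[f]` of the random variable `f` on the finite probability space `(Ω, p)`. -/
def rvEnt {Ω α : Type*} (p : Ω → ℝ) (f : Ω → α) : ℝ := ent (push f p)

local notation "H[" f ";" p "]" => rvEnt p f

/-- The conditional entropy `H[f | g]` of random variables on the finite probability space
`(Ω, p)`, defined through the chain rule. -/
def rvCondEnt {Ω α β : Type*} (p : Ω → ℝ) (f : Ω → α) (g : Ω → β) : ℝ :=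
  H[fun ω ↦ (f ω, g ω); p] - H[g; p]

local notation "H[" f "|" g ";" p "]" => rvCondEnt p f g

section Entropy

variable {Ω Ω' α β γ : Type*} {p : Ω → ℝ} {q : Ω' → ℝ}

theorem rvEnt_eq_sum [Fintype Ω] (p : Ω → ℝ) (f : Ω → α) :
    H[f; p] = ∑ ω, p ω * -log (push f p (f ω)) := by
  rw [← finsum_push_mul f p fun a ↦ -log (push f p a)]
  simp only [rvEnt, ent, negMulLog, neg_mul, mul_neg]

theorem rvEnt_push [Finite Ω] (f : Ω → α) (g : α → β) (p : Ω → ℝ) :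
    H[g; push f p] = H[g ∘ f; p] := by
  rw [rvEnt, push_push, rvEnt]

theorem rvEnt_comp_equiv [Finite Ω] [Finite Ω'] (e : Ω ≃ Ω') (h : ∀ ω, p ω = q (e ω)) (f : Ω' → α) :
    H[f ∘ e; p] = H[f; q] := by
  classical
  have := Fintype.ofFinite Ω
  have := Fintype.ofFinite Ω'
  rw [← rvEnt_push]
  congr 1
  ext ω
  simp [push_apply, ← e.eq_symm_apply, h]

theorem rvEnt_id [Finite Ω] (p : Ω → ℝ) : H[id; p] = ent p := by rw [rvEnt, push_id]

theorem rvEnt_nonneg [Fintype Ω] (hp : p ∈ stdSimplex ℝ Ω) (f : Ω → α) : 0 ≤ H[f; p] :=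
  finsum_nonneg fun a ↦ negMulLog_nonneg (push_nonneg hp f a) (push_le_one hp f a)

theorem rvEnt_le_of_determines [Fintype Ω] (hp : p ∈ stdSimplex ℝ Ω) {f : Ω → α} {g : Ω → β}
    (h : ∀ ω ω', p ω ≠ 0 → p ω' ≠ 0 → f ω = f ω' → g ω = g ω') : H[g; p] ≤ H[f; p] := by
  rw [rvEnt_eq_sum, rvEnt_eq_sum]
  refine Finset.sum_le_sum fun ω _ ↦ ?_
  obtain hω | hω := eq_or_ne (p ω) 0
  · simp [hω]
  refine mul_le_mul_of_nonneg_left (neg_le_neg <| log_le_log (push_pos hp f hω) ?_) (hp.1 ω)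
  exact push_mono hp fun ω' hω' hf ↦ h ω' ω hω' hω hf

theorem rvEnt_congr_of_support [Fintype Ω] (hp : p ∈ stdSimplex ℝ Ω) {f : Ω → α} {g : Ω → β}
    (h : ∀ ω ω', p ω ≠ 0 → p ω' ≠ 0 → (f ω = f ω' ↔ g ω = g ω')) : H[f; p] = H[g; p] :=
  le_antisymm (rvEnt_le_of_determines hp fun ω ω' hω hω' ↦ (h ω ω' hω hω').2)
    (rvEnt_le_of_determines hp fun ω ω' hω hω' ↦ (h ω ω' hω hω').1)

theorem rvEnt_congr [Finite Ω] (p : Ω → ℝ) {f : Ω → α} {g : Ω → β}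
    (h : ∀ ω ω', f ω = f ω' ↔ g ω = g ω') : H[f; p] = H[g; p] := by
  classical
  have := Fintype.ofFinite Ω
  simp only [rvEnt_eq_sum, push_apply, h]

theorem rvEnt_const [Fintype Ω] (hp : p ∈ stdSimplex ℝ Ω) (a : α) : H[fun _ ↦ a; p] = 0 := by
  classical
  simp [rvEnt_eq_sum, push_apply, hp.2]

theorem rvEnt_le_crossEntropy [Fintype Ω] (hp : p ∈ stdSimplex ℝ Ω) {f : Ω → α} {S : Finset α}
    {φ : α → ℝ} (hS : ∀ ω, p ω ≠ 0 → f ω ∈ S) (hφ : ∀ a ∈ S, 0 ≤ φ a)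
    (hφ_pos : ∀ ω, p ω ≠ 0 → 0 < φ (f ω)) (hsum : ∑ a ∈ S, φ a ≤ 1) :
    H[f; p] ≤ ∑ ω, p ω * -log (φ (f ω)) := by
  have log_le (ω : Ω) : p ω * -log (push f p (f ω)) - p ω * -log (φ (f ω)) ≤
      p ω * (φ (f ω) / push f p (f ω)) - p ω := by
    obtain hω | hω := eq_or_ne (p ω) 0
    · simp [hω]
    have hpush := push_pos hp f hω
    have := log_le_sub_one_of_pos (div_pos (hφ_pos ω hω) hpush)
    rw [log_div (hφ_pos ω hω).ne' hpush.ne'] at this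
    nlinarith [mul_le_mul_of_nonneg_left this (hp.1 ω)]
  have ratio_le : ∑ ω, p ω * (φ (f ω) / push f p (f ω)) ≤ 1 := by
    rw [← sum_push_mul_of_support hS fun a ↦ φ a / push f p a]
    refine (Finset.sum_le_sum fun a ha ↦ ?_).trans hsum
    obtain h | h := eq_or_ne (push f p a) 0
    · simpa [h] using hφ a ha
    · rw [mul_div_cancel₀ _ h]
  have := Finset.sum_le_sum fun ω (_ : ω ∈ Finset.univ) ↦ log_le ω
  rw [rvEnt_eq_sum]
  simp only [Finset.sum_sub_distrib, hp.2] at this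
  linarith

theorem rvEnt_pair_le [Fintype Ω] (hp : p ∈ stdSimplex ℝ Ω) (f : Ω → α) (g : Ω → β) :
    H[fun ω ↦ (f ω, g ω); p] ≤ H[f; p] + H[g; p] := by
  classical
  have split (ω : Ω) : p ω * -log (push f p (f ω) * push g p (g ω)) =
      p ω * -log (push f p (f ω)) + p ω * -log (push g p (g ω)) := by
    obtain hω | hω := eq_or_ne (p ω) 0
    · simp [hω]
    rw [log_mul (push_pos hp f hω).ne' (push_pos hp g hω).ne', neg_add, mul_add]
  refine (rvEnt_le_crossEntropy hp (S := Finset.univ.image f ×ˢ Finset.univ.image g)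
    (φ := fun x ↦ push f p x.1 * push g p x.2) (by simp)
    (fun _ _ ↦ mul_nonneg (push_nonneg hp _ _) (push_nonneg hp _ _))
    (fun ω hω ↦ mul_pos (push_pos hp f hω) (push_pos hp g hω)) ?_).trans_eq ?_
  · have sum_f := sum_push_mul_of_support (p := p) (f := f) (S := .image f .univ) (by simp)
      fun _ ↦ 1
    have sum_g := sum_push_mul_of_support (p := p) (f := g) (S := .image g .univ) (by simp)
      fun _ ↦ 1
    simp only [mul_one, hp.2] at sum_f sum_g
    rw [Finset.sum_product, ← Finset.sum_mul_sum, sum_f, sum_g, mul_one]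
  · simp only [split, Finset.sum_add_distrib, rvEnt_eq_sum]

theorem rvEnt_prodDist [Fintype Ω] [Fintype Ω'] (hp : p ∈ stdSimplex ℝ Ω)
    (hq : q ∈ stdSimplex ℝ Ω') (f : Ω → α) (g : Ω' → β) :
    H[Prod.map f g; prodDist p q] = H[f; p] + H[g; q] := by
  have split (x : Ω × Ω') : prodDist p q x * -log (push f p (f x.1) * push g q (g x.2)) =
      prodDist p q x * (-log (push f p (f x.1)) + -log (push g q (g x.2))) := by
    obtain hx | hx := eq_or_ne (prodDist p q x) 0
    · rw [hx, zero_mul, zero_mul]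
    rw [prodDist, mul_ne_zero_iff] at hx
    rw [log_mul (push_pos hp f hx.1).ne' (push_pos hq g hx.2).ne', neg_add]
  rw [rvEnt_eq_sum, push_prodMap_prodDist, rvEnt_eq_sum p f, rvEnt_eq_sum q g]
  refine (Finset.sum_congr rfl fun x _ ↦ split x).trans ?_
  rw [sum_prodDist_mul]
  simp only [mul_add, Finset.sum_add_distrib, ← Finset.sum_mul, hp.2, hq.2, one_mul]

theorem rvCondEnt_eq_sum [Fintype Ω] (hp : p ∈ stdSimplex ℝ Ω) (f : Ω → α) (B : Ω → β) :
    H[f | B; p] = ∑ ω, p ω * H[f; condOn p B (B ω)] := by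
  have fibre (ω : Ω) : p ω * H[f; condOn p B (B ω)] = p ω * ∑ ω', condOn p B (B ω) ω' *
      (-log (push (fun ω ↦ (f ω, B ω)) p (f ω', B ω')) - -log (push B p (B ω'))) := by
    obtain hω | hω := eq_or_ne (p ω) 0
    · simp [hω]
    rw [rvEnt_eq_sum]
    congr 1
    refine Finset.sum_congr rfl fun ω' _ ↦ ?_
    obtain h | h := eq_or_ne (condOn p B (B ω) ω') 0
    · simp [h]
    obtain ⟨hω', hB⟩ := condOn_ne_zero h
    rw [push_condOn, hB, log_div (hB ▸ (push_pos hp (fun ω ↦ (f ω, B ω)) hω').ne')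
      (push_pos hp B hω).ne']
    ring
  rw [Finset.sum_congr rfl fun ω _ ↦ fibre ω, sum_condOn_mul hp B fun ω' ↦ _]
  simp only [rvCondEnt, rvEnt_eq_sum, mul_sub, Finset.sum_sub_distrib]

theorem rvEnt_submodular [Fintype Ω] (hp : p ∈ stdSimplex ℝ Ω) (f : Ω → α) (g : Ω → β)
    (k : Ω → γ) :
    H[fun ω ↦ (f ω, g ω, k ω); p] + H[k; p] ≤
      H[fun ω ↦ (f ω, k ω); p] + H[fun ω ↦ (g ω, k ω); p] := by
  have averaged : H[fun ω ↦ (f ω, g ω) | k; p] ≤ H[f | k; p] + H[g | k; p] := by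
    simp only [rvCondEnt_eq_sum hp, ← Finset.sum_add_distrib, ← mul_add]
    refine Finset.sum_le_sum fun ω _ ↦ ?_
    obtain hω | hω := eq_or_ne (p ω) 0
    · simp [hω]
    exact mul_le_mul_of_nonneg_left (rvEnt_pair_le (condOn_mem_stdSimplex hp k hω) f g) (hp.1 ω)
  have assoc : H[fun ω ↦ ((f ω, g ω), k ω); p] = H[fun ω ↦ (f ω, g ω, k ω); p] :=
    rvEnt_congr p fun ω ω' ↦ by simp only [Prod.mk.injEq, and_assoc]
  simp only [rvCondEnt, assoc] at averaged
  linarith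

end Entropy

section CondCopies

variable {Ω α β γ : Type*} {p : Ω → ℝ}

/-- The joint distribution of two samples from `p` that are conditionally independent given a
common value of `c`. -/
def condCopies (p : Ω → ℝ) (c : Ω → α) : Ω × Ω → ℝ := fun x ↦ p x.1 * condOn p c (c x.1) x.2

theorem sum_condCopies_mul [Fintype Ω] (p : Ω → ℝ) (c : Ω → α) (g : Ω × Ω → ℝ) :
    ∑ x, condCopies p c x * g x = ∑ ω, p ω * ∑ ω', condOn p c (c ω) ω' * g (ω, ω') := by
  simp only [Fintype.sum_prod_type, condCopies, mul_assoc, Finset.mul_sum]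

theorem condCopies_ne_zero {c : Ω → α} {x : Ω × Ω} (hx : condCopies p c x ≠ 0) :
    c x.2 = c x.1 :=
  (condOn_ne_zero (right_ne_zero_of_mul hx)).2

theorem condCopies_congr [Finite Ω] (p : Ω → ℝ) {c : Ω → α} {c' : Ω → β}
    (h : ∀ ω ω', c ω = c ω' ↔ c' ω = c' ω') : condCopies p c = condCopies p c' := by
  classical
  have := Fintype.ofFinite Ω
  ext x
  simp only [condCopies, condOn, push_apply, Set.indicator_apply, Set.mem_preimage,
    Set.mem_singleton_iff, h]

variable [Fintype Ω]

theorem push_fst_condCopies (hp : p ∈ stdSimplex ℝ Ω) (c : Ω → α) :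
    push Prod.fst (condCopies p c) = p := by
  classical
  ext ω
  have := sum_condCopies_mul p c fun x ↦ if x.1 = ω then 1 else 0
  simp only [mul_ite, mul_one, mul_zero] at this
  rw [push_apply, this]
  obtain hω | hω := eq_or_ne (p ω) 0
  · simp [hω]
  · simp [(condOn_mem_stdSimplex hp c hω).2]

theorem push_snd_condCopies (hp : p ∈ stdSimplex ℝ Ω) (c : Ω → α) :
    push Prod.snd (condCopies p c) = p := by
  classical
  ext ω
  have := sum_condCopies_mul p c fun x ↦ if x.2 = ω then 1 else 0
  rw [sum_condOn_mul hp c fun ω' ↦ if ω' = ω then 1 else 0] at this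
  simp only [mul_ite, mul_one, mul_zero] at this
  rw [push_apply, this]
  simp

theorem condCopies_mem_stdSimplex (hp : p ∈ stdSimplex ℝ Ω) (c : Ω → α) :
    condCopies p c ∈ stdSimplex ℝ (Ω × Ω) := by
  refine ⟨fun x ↦ ?_, ?_⟩
  · obtain hx | hx := eq_or_ne (p x.1) 0
    · simp [condCopies, hx]
    · exact mul_nonneg (hp.1 _) ((condOn_mem_stdSimplex hp c hx).1 _)
  · have := sum_condCopies_mul p c fun _ ↦ 1
    rw [sum_condOn_mul hp c fun _ ↦ 1] at this
    simpa only [mul_one, hp.2] using this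

theorem rvEnt_fst_condCopies (hp : p ∈ stdSimplex ℝ Ω) (c : Ω → α) (f : Ω → β) :
    H[fun x ↦ f x.1; condCopies p c] = H[f; p] := by
  conv_rhs => rw [← push_fst_condCopies hp c]
  exact (rvEnt_push _ _ _).symm

theorem rvEnt_snd_condCopies (hp : p ∈ stdSimplex ℝ Ω) (c : Ω → α) (f : Ω → β) :
    H[fun x ↦ f x.2; condCopies p c] = H[f; p] := by
  conv_rhs => rw [← push_snd_condCopies hp c]
  exact (rvEnt_push _ _ _).symm

theorem condOn_condCopies (hp : p ∈ stdSimplex ℝ Ω) (c : Ω → α) (a : α) :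
    condOn (condCopies p c) (fun x ↦ c x.1) a = prodDist (condOn p c a) (condOn p c a) := by
  classical
  have push_first : push (fun x ↦ c x.1) (condCopies p c) a = push c p a := by
    conv_rhs => rw [← push_fst_condCopies hp c, push_push]
    rfl
  ext x
  simp only [condOn, push_first, condCopies, prodDist, Set.indicator_apply, Set.mem_preimage,
    Set.mem_singleton_iff]
  grind

theorem rvCondEnt_condCopies (hp : p ∈ stdSimplex ℝ Ω) (c : Ω → α) (F : Ω × Ω → β) :
    H[F | fun x ↦ c x.1; condCopies p c] =
      ∑ ω, p ω * H[F; prodDist (condOn p c (c ω)) (condOn p c (c ω))] := by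
  rw [rvCondEnt_eq_sum (condCopies_mem_stdSimplex hp c)]
  simp only [condOn_condCopies hp]
  have transfer := sum_push_mul Prod.fst (condCopies p c) fun ω ↦
    H[F; prodDist (condOn p c (c ω)) (condOn p c (c ω))]
  rw [push_fst_condCopies hp] at transfer
  exact transfer.symm

theorem rvEnt_pair_condCopies (hp : p ∈ stdSimplex ℝ Ω) (c : Ω → α) (f : Ω → β) (g : Ω → γ) :
    H[fun x ↦ ((f x.1, g x.2), c x.1); condCopies p c] =
      H[fun ω ↦ (f ω, c ω); p] + H[fun ω ↦ (g ω, c ω); p] - H[c; p] := by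
  have chain : H[Prod.map f g | fun x ↦ c x.1; condCopies p c] = H[f | c; p] + H[g | c; p] := by
    rw [rvCondEnt_condCopies hp, rvCondEnt_eq_sum hp, rvCondEnt_eq_sum hp,
      ← Finset.sum_add_distrib]
    refine Finset.sum_congr rfl fun ω _ ↦ ?_
    obtain hω | hω := eq_or_ne (p ω) 0
    · simp [hω]
    have hcond := condOn_mem_stdSimplex hp c hω
    rw [rvEnt_prodDist hcond hcond, mul_add]
  simp only [rvCondEnt, rvEnt_fst_condCopies hp, Prod.map] at chain
  linarith

section BalogSzemerediGowers

variable {G : Type*} [AddCommGroup G]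

theorem rvEnt_condCopies_fst_le (hp : p ∈ stdSimplex ℝ Ω) (A C : Ω → G) (D : Ω → γ) :
    H[fun x ↦ (A x.1, A x.1 + (A x.2 + C x.1), D x.1); condCopies p fun ω ↦ (C ω, D ω)] ≤
      H[fun ω ↦ (A ω, D ω); p] + H[fun ω ↦ (A ω + C ω, D ω); p] - H[D; p] := by
  set c : Ω → G × γ := fun ω ↦ (C ω, D ω)
  set P := condCopies p c
  have hP : P ∈ stdSimplex ℝ (Ω × Ω) := condCopies_mem_stdSimplex hp c
  have common {x : Ω × Ω} (hx : P x ≠ 0) : C x.2 = C x.1 ∧ D x.2 = D x.1 :=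
    Prod.ext_iff.1 (condCopies_ne_zero hx)
  have sub := rvEnt_submodular hP (fun x ↦ A x.1) (fun x ↦ A x.2 + C x.2) fun x ↦ D x.1
  have e₁ : H[fun x ↦ (A x.1, A x.1 + (A x.2 + C x.1), D x.1); P] =
      H[fun x ↦ (A x.1, A x.2 + C x.2, D x.1); P] := by
    refine rvEnt_congr_of_support hP fun x y hx hy ↦ ?_
    simp only [Prod.mk.injEq, (common hx).1, (common hy).1]
    grind
  have e₂ : H[fun x ↦ (A x.2 + C x.2, D x.1); P] = H[fun x ↦ (A x.2 + C x.2, D x.2); P] :=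
    rvEnt_congr_of_support hP (by grind)
  rw [e₂, rvEnt_snd_condCopies hp c fun ω ↦ (A ω + C ω, D ω), rvEnt_fst_condCopies hp c D,
    rvEnt_fst_condCopies hp c fun ω ↦ (A ω, D ω)] at sub
  linarith

theorem rvEnt_condCopies_fst_add_le (hp : p ∈ stdSimplex ℝ Ω) (A C : Ω → G) (D : Ω → γ) :
    H[fun x ↦ (A x.1 + C x.1, A x.1 + (A x.2 + C x.1), D x.1);
        condCopies p fun ω ↦ (C ω, D ω)] ≤
      H[fun ω ↦ (A ω, D ω); p] + H[fun ω ↦ (A ω + C ω, D ω); p] - H[D; p] := by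
  set c : Ω → G × γ := fun ω ↦ (C ω, D ω)
  set P := condCopies p c
  have hP : P ∈ stdSimplex ℝ (Ω × Ω) := condCopies_mem_stdSimplex hp c
  have common {x : Ω × Ω} (hx : P x ≠ 0) : D x.2 = D x.1 :=
    (Prod.ext_iff.1 (condCopies_ne_zero hx)).2
  have sub := rvEnt_submodular hP (fun x ↦ A x.2) (fun x ↦ A x.1 + C x.1) fun x ↦ D x.1
  have e₁ : H[fun x ↦ (A x.1 + C x.1, A x.1 + (A x.2 + C x.1), D x.1); P] =
      H[fun x ↦ (A x.2, A x.1 + C x.1, D x.1); P] :=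
    rvEnt_congr _ (by grind)
  have e₂ : H[fun x ↦ (A x.2, D x.1); P] = H[fun x ↦ (A x.2, D x.2); P] :=
    rvEnt_congr_of_support hP (by grind)
  rw [e₂, rvEnt_snd_condCopies hp c fun ω ↦ (A ω, D ω), rvEnt_fst_condCopies hp c D,
    rvEnt_fst_condCopies hp c fun ω ↦ (A ω + C ω, D ω)] at sub
  linarith

/-- The entropic Balog–Szemerédi–Gowers inequality. -/
theorem rvCondEnt_add_condCopies_le (hp : p ∈ stdSimplex ℝ Ω) (A C : Ω → G) (D : Ω → γ) :
    H[fun x ↦ A x.1 + A x.2 | fun x ↦ (C x.1, D x.1); condCopies p fun ω ↦ (C ω, D ω)] ≤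
      2 * H[A | D; p] + 2 * H[fun ω ↦ A ω + C ω | D; p] + H[C | D; p] -
        2 * H[fun ω ↦ (A ω, C ω) | D; p] := by
  have first_le := rvEnt_condCopies_fst_le hp A C D
  have second_le := rvEnt_condCopies_fst_add_le hp A C D
  set c : Ω → G × γ := fun ω ↦ (C ω, D ω)
  set P := condCopies p c
  set E : Ω × Ω → G := fun x ↦ A x.1 + (A x.2 + C x.1)
  have hP : P ∈ stdSimplex ℝ (Ω × Ω) := condCopies_mem_stdSimplex hp c
  have joint : H[fun x ↦ (A x.1, A x.1 + C x.1, E x, D x.1); P] =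
      2 * H[fun ω ↦ (A ω, c ω); p] - H[c; p] := by
    rw [two_mul, ← rvEnt_pair_condCopies hp c A A]
    exact rvEnt_congr _ (by grind)
  have sum_le : H[fun x ↦ (A x.1 + A x.2, c x.1); P] + H[D; p] ≤
      H[fun x ↦ (E x, D x.1); P] + H[c; p] := by
    have sub := rvEnt_submodular hP E (fun x ↦ C x.1) fun x ↦ D x.1
    have e : H[fun x ↦ (A x.1 + A x.2, c x.1); P] = H[fun x ↦ (E x, C x.1, D x.1); P] := by
      refine rvEnt_congr _ fun x y ↦ ?_
      simp only [Prod.mk.injEq, E, c]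
      grind
    rw [rvEnt_fst_condCopies hp c D, rvEnt_fst_condCopies hp c c] at sub
    linarith
  have sub := rvEnt_submodular hP (fun x ↦ A x.1) (fun x ↦ A x.1 + C x.1) fun x ↦ (E x, D x.1)
  have assoc : H[fun ω ↦ ((A ω, C ω), D ω); p] = H[fun ω ↦ (A ω, c ω); p] :=
    rvEnt_congr _ (by grind)
  have : H[fun x ↦ (C x.1, D x.1); P] = H[c; p] := rvEnt_fst_condCopies hp c c
  simp only [rvCondEnt, assoc, this]
  change _ ≤ _ + 2 * (_ - _) + (H[c; p] - _) - _
  linarith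

end BalogSzemerediGowers

end CondCopies

universe u

/-- A `G`-valued random variable `Z` on a finite probability space `(Ω, p)`, together with a second
random variable `B` on which it is conditioned. -/
structure CondVar (G : Type u) where
  Ω : Type u
  [fintype : Fintype Ω]
  β : Type u
  p : Ω → ℝ
  p_mem : p ∈ stdSimplex ℝ Ω
  Z : Ω → G
  B : Ω → β

attribute [instance] CondVar.fintype

namespace CondVar

section Basic

variable {G G' : Type u}

/-- The conditional entropy `H[Z | B]`. -/
def entropy (T : CondVar G) : ℝ := H[T.Z | T.B; T.p]

/-- The image `ρ(Z)` of a conditioned random variable, with the same conditioning. -/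
def map (ρ : G → G') (T : CondVar G) : CondVar G' where
  Ω := T.Ω
  β := T.β
  p := T.p
  p_mem := T.p_mem
  Z := ρ ∘ T.Z
  B := T.B

/-- The sum of independent copies of two conditioned random variables, conditioned on both pieces
of side information. -/
instance [Add G] : Add (CondVar G) where
  add S T :=
    { Ω := S.Ω × T.Ω
      β := S.β × T.β
      p := prodDist S.p T.p
      p_mem := prodDist_mem_stdSimplex S.p_mem T.p_mem
      Z := fun x ↦ S.Z x.1 + T.Z x.2
      B := Prod.map S.B T.B }

/-- The first of two independent copies of `T`, conditioned in addition on their sum. -/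
def fibre [Add G] (T : CondVar G) : CondVar G where
  Ω := T.Ω × T.Ω
  β := G × T.β × T.β
  p := prodDist T.p T.p
  p_mem := prodDist_mem_stdSimplex T.p_mem T.p_mem
  Z := fun x ↦ T.Z x.1
  B := fun x ↦ (T.Z x.1 + T.Z x.2, T.B x.1, T.B x.2)

/-- The unconditioned random variable with distribution `z`. -/
def ofLaw [Fintype G] (z : G → ℝ) (hz : z ∈ stdSimplex ℝ G) : CondVar G where
  Ω := G
  β := PUnit
  p := z
  p_mem := hz
  Z := id
  B := fun _ ↦ ⟨⟩

theorem rvEnt_pair (T : CondVar G) :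
    H[fun ω ↦ (T.Z ω, T.B ω); T.p] = T.entropy + H[T.B; T.p] :=
  (sub_add_cancel _ _).symm

theorem entropy_nonneg (T : CondVar G) : 0 ≤ T.entropy :=
  sub_nonneg.2 <| rvEnt_le_of_determines T.p_mem (by grind)

theorem entropy_map (ρ : G → G') (T : CondVar G) :
    (T.map ρ).entropy = H[fun ω ↦ (ρ (T.Z ω), T.B ω); T.p] - H[T.B; T.p] :=
  rfl

theorem entropy_map_le (ρ : G → G') (T : CondVar G) : (T.map ρ).entropy ≤ T.entropy := by
  rw [entropy_map]
  exact sub_le_sub_right (rvEnt_le_of_determines T.p_mem (by grind)) _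

theorem entropy_map_const (c : G') (T : CondVar G) : (T.map fun _ ↦ c).entropy = 0 := by
  rw [entropy_map, sub_eq_zero]
  exact rvEnt_congr _ (by grind)

theorem entropy_map_ofLaw [Fintype G] (ρ : G → G') (z : G → ℝ) (hz : z ∈ stdSimplex ℝ G) :
    ((ofLaw z hz).map ρ).entropy = H[ρ; z] := by
  change H[fun g ↦ (ρ g, PUnit.unit); z] - H[fun _ ↦ PUnit.unit; z] = _
  rw [rvEnt_const hz, sub_zero]
  exact rvEnt_congr _ (by grind)

theorem entropy_ofLaw [Fintype G] (z : G → ℝ) (hz : z ∈ stdSimplex ℝ G) :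
    (ofLaw z hz).entropy = ent z := by
  rw [← rvEnt_id, ← entropy_map_ofLaw id z hz]
  rfl

/-- `T'` refines `T` if, up to a change of the probability space, it is the same random variable
conditioned on more information. -/
def Refines (T' T : CondVar G) : Prop :=
  ∃ φ : T'.Ω → T.Ω, push φ T'.p = T.p ∧ T'.Z = T.Z ∘ φ ∧
    ∀ ω ω', T'.B ω = T'.B ω' → T.B (φ ω) = T.B (φ ω')

theorem Refines.refl (T : CondVar G) : T.Refines T := ⟨id, push_id _, rfl, fun _ _ ↦ id⟩

theorem Refines.entropy_sub_map_le {T' T : CondVar G} (h : T'.Refines T) (ρ : G → G') :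
    T'.entropy - (T'.map ρ).entropy ≤ T.entropy - (T.map ρ).entropy := by
  obtain ⟨φ, hp, hZ, hB⟩ := h
  have sub := rvEnt_submodular T'.p_mem T'.Z T'.B fun ω ↦ (ρ (T'.Z ω), T.B (φ ω))
  have e₁ : H[fun ω ↦ (T'.Z ω, T'.B ω, ρ (T'.Z ω), T.B (φ ω)); T'.p] =
      H[fun ω ↦ (T'.Z ω, T'.B ω); T'.p] := rvEnt_congr _ (by grind)
  have e₂ : H[fun ω ↦ (ρ (T'.Z ω), T.B (φ ω)); T'.p] = H[fun ω ↦ (ρ (T.Z ω), T.B ω); T.p] := by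
    rw [← hp, rvEnt_push, hZ]
    rfl
  have e₃ : H[fun ω ↦ (T'.Z ω, ρ (T'.Z ω), T.B (φ ω)); T'.p] =
      H[fun ω ↦ (T.Z ω, T.B ω); T.p] := by
    rw [← hp, rvEnt_push, hZ]
    exact rvEnt_congr _ (by grind)
  have e₄ : H[fun ω ↦ (T'.B ω, ρ (T'.Z ω), T.B (φ ω)); T'.p] =
      H[fun ω ↦ (ρ (T'.Z ω), T'.B ω); T'.p] := rvEnt_congr _ (by grind)
  rw [e₁, e₂, e₃, e₄, rvEnt_pair, rvEnt_pair] at sub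
  rw [entropy_map, entropy_map]
  linarith

theorem Refines.entropy_le {T' T : CondVar G} (h : T'.Refines T) : T'.entropy ≤ T.entropy := by
  simpa only [entropy_map_const, sub_zero] using h.entropy_sub_map_le fun _ ↦ PUnit.unit

theorem Refines.add [Add G] {S' S T' T : CondVar G} (hS : S'.Refines S) (hT : T'.Refines T) :
    (S' + T').Refines (S + T) := by
  obtain ⟨φ, hp, hZ, hB⟩ := hS
  obtain ⟨ψ, hq, hW, hC⟩ := hT
  refine ⟨Prod.map φ ψ, ?_, ?_, fun x y h ↦ ?_⟩
  · exact (push_prodMap_prodDist φ ψ S'.p T'.p).trans (by rw [hp, hq]; rfl)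
  · ext x
    exact congrArg₂ _ (congrFun hZ x.1) (congrFun hW x.2)
  · exact Prod.ext (hB _ _ (Prod.ext_iff.1 h).1) (hC _ _ (Prod.ext_iff.1 h).2)

theorem fibre_refines [Add G] (T : CondVar G) : T.fibre.Refines T :=
  ⟨Prod.fst, push_fst_prodDist T.p T.p_mem, rfl, fun _ _ h ↦ by grind [fibre]⟩

theorem rvEnt_indep_pair (S : CondVar G) (T : CondVar G') :
    H[fun x ↦ ((S.Z x.1, S.B x.1), T.Z x.2, T.B x.2); prodDist S.p T.p] =
      S.entropy + T.entropy + (H[S.B; S.p] + H[T.B; T.p]) := by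
  refine (rvEnt_prodDist S.p_mem T.p_mem (fun ω ↦ (S.Z ω, S.B ω)) fun ω ↦ (T.Z ω, T.B ω)).trans ?_
  rw [rvEnt_pair, rvEnt_pair]
  ring

end Basic

section AddCommGroup

variable {G G' : Type u} [AddCommGroup G]

theorem add_Z (S T : CondVar G) (x : S.Ω × T.Ω) : (S + T).Z x = S.Z x.1 + T.Z x.2 := rfl

theorem add_B (S T : CondVar G) (x : S.Ω × T.Ω) : (S + T).B x = (S.B x.1, T.B x.2) := rfl

theorem rvEnt_B_add (S T : CondVar G) :
    H[(S + T).B; (S + T).p] = H[S.B; S.p] + H[T.B; T.p] :=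
  rvEnt_prodDist S.p_mem T.p_mem S.B T.B

theorem rvEnt_map_add (ρ : G → G') (S T : CondVar G) :
    H[fun x ↦ (ρ (S.Z x.1 + T.Z x.2), S.B x.1, T.B x.2); prodDist S.p T.p] =
      ((S + T).map ρ).entropy + (H[S.B; S.p] + H[T.B; T.p]) := by
  rw [← rvEnt_B_add]
  exact ((S + T).map ρ).rvEnt_pair

theorem rvEnt_pair_add (S T : CondVar G) :
    H[fun x ↦ (S.Z x.1 + T.Z x.2, S.B x.1, T.B x.2); prodDist S.p T.p] =
      (S + T).entropy + (H[S.B; S.p] + H[T.B; T.p]) :=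
  rvEnt_map_add id S T

theorem entropy_add_le (S T : CondVar G) : (S + T).entropy ≤ S.entropy + T.entropy := by
  rw [← add_le_add_iff_right (H[S.B; S.p] + H[T.B; T.p]), ← rvEnt_pair_add, ← rvEnt_indep_pair]
  exact rvEnt_le_of_determines (S + T).p_mem (by grind)

protected theorem map_add [AddCommGroup G'] (ρ : G →+ G') (S T : CondVar G) :
    (S + T).map ρ = S.map ρ + T.map ρ := by
  change CondVar.mk _ _ _ _ _ _ = CondVar.mk _ _ _ _ _ _
  congr 1
  ext x
  exact map_add ρ _ _

theorem entropy_sub_map_le_add [AddCommGroup G'] (ρ : G →+ G') (S T : CondVar G) :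
    S.entropy - (S.map ρ).entropy ≤ (S + T).entropy - ((S + T).map ρ).entropy := by
  have hP := prodDist_mem_stdSimplex S.p_mem T.p_mem
  set P := prodDist S.p T.p
  have sub := rvEnt_submodular hP (fun x ↦ S.Z x.1 + T.Z x.2) (fun x ↦ T.Z x.2)
    fun x ↦ (ρ (S.Z x.1 + T.Z x.2), S.B x.1, T.B x.2)
  have e₁ : H[fun x ↦ (S.Z x.1 + T.Z x.2, T.Z x.2, ρ (S.Z x.1 + T.Z x.2), S.B x.1, T.B x.2); P] =
      H[fun x ↦ ((S.Z x.1, S.B x.1), T.Z x.2, T.B x.2); P] := rvEnt_congr _ (by grind)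
  have e₂ : H[fun x ↦ (S.Z x.1 + T.Z x.2, ρ (S.Z x.1 + T.Z x.2), S.B x.1, T.B x.2); P] =
      H[fun x ↦ (S.Z x.1 + T.Z x.2, S.B x.1, T.B x.2); P] := rvEnt_congr _ (by grind)
  have e₃ : H[fun x ↦ (T.Z x.2, ρ (S.Z x.1 + T.Z x.2), S.B x.1, T.B x.2); P] =
      (S.map ρ).entropy + T.entropy + (H[S.B; S.p] + H[T.B; T.p]) := by
    refine (rvEnt_congr _ fun x y ↦ ?_).trans (rvEnt_indep_pair (S.map ρ) T)
    simp only [map_add, Prod.mk.injEq, map, Function.comp_apply]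
    grind
  rw [e₁, e₂, e₃, rvEnt_indep_pair, rvEnt_map_add, rvEnt_pair_add] at sub
  linarith

theorem entropy_le_add (S T : CondVar G) : S.entropy ≤ (S + T).entropy := by
  have zero (R : CondVar G) : (R.map (0 : G →+ G)).entropy = 0 := entropy_map_const 0 R
  simpa only [zero, sub_zero] using entropy_sub_map_le_add (0 : G →+ G) S T

theorem entropy_fibre (T : CondVar G) : T.fibre.entropy = 2 * T.entropy - (T + T).entropy := by
  have total : H[fun x ↦ (T.Z x.1, T.Z x.1 + T.Z x.2, T.B x.1, T.B x.2); prodDist T.p T.p] =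
      2 * T.entropy + (H[T.B; T.p] + H[T.B; T.p]) := by
    rw [two_mul, ← rvEnt_indep_pair]
    exact rvEnt_congr _ (by grind)
  refine (congrArg₂ _ total (rvEnt_pair_add T T)).trans ?_
  ring

theorem entropy_add_comm (S T : CondVar G) : (S + T).entropy = (T + S).entropy := by
  rw [← add_left_inj (H[S.B; S.p] + H[T.B; T.p]), ← rvEnt_pair_add, add_comm H[S.B; S.p],
    ← rvEnt_pair_add, ← rvEnt_comp_equiv (.prodComm ..) (fun x ↦ mul_comm ..)]
  exact rvEnt_congr _ (by grind)

theorem entropy_add_assoc (R S T : CondVar G) : (R + S + T).entropy = (R + (S + T)).entropy := by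
  have h : H[fun x : (R.Ω × S.Ω) × T.Ω ↦ (R.Z x.1.1 + S.Z x.1.2 + T.Z x.2,
        (R.B x.1.1, S.B x.1.2), T.B x.2); prodDist (prodDist R.p S.p) T.p] =
      H[fun x ↦ (R.Z x.1 + (S.Z x.2.1 + T.Z x.2.2), R.B x.1, S.B x.2.1, T.B x.2.2);
        prodDist R.p (prodDist S.p T.p)] := by
    rw [← rvEnt_comp_equiv (.prodAssoc ..) fun x ↦ mul_assoc ..]
    exact rvEnt_congr _ (by grind)
  have hl := rvEnt_pair_add (R + S) T
  have hr := rvEnt_pair_add R (S + T)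
  rw [rvEnt_B_add] at hl hr
  linarith [hl.symm.trans (h.trans hr)]

/-- The entropic Kaimanovich–Vershik inequality. -/
theorem entropy_add_add_le (R S T : CondVar G) :
    (R + S + T).entropy + S.entropy ≤ (R + S).entropy + (S + T).entropy := by
  have hP := prodDist_mem_stdSimplex (prodDist_mem_stdSimplex R.p_mem S.p_mem) T.p_mem
  set P := prodDist (prodDist R.p S.p) T.p
  have sub := rvEnt_submodular hP (fun x ↦ R.Z x.1.1) (fun x ↦ T.Z x.2)
    fun x ↦ (R.Z x.1.1 + S.Z x.1.2 + T.Z x.2, (R.B x.1.1, S.B x.1.2), T.B x.2)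
  have joint : H[fun x ↦ (R.Z x.1.1, T.Z x.2, R.Z x.1.1 + S.Z x.1.2 + T.Z x.2,
      (R.B x.1.1, S.B x.1.2), T.B x.2); P] =
        R.entropy + S.entropy + T.entropy + (H[R.B; R.p] + H[S.B; S.p] + H[T.B; T.p]) := by
    have := rvEnt_prodDist (prodDist_mem_stdSimplex R.p_mem S.p_mem) T.p_mem
      (fun x ↦ ((R.Z x.1, R.B x.1), S.Z x.2, S.B x.2)) fun ω ↦ (T.Z ω, T.B ω)
    rw [rvEnt_indep_pair, rvEnt_pair] at this
    refine (rvEnt_congr _ fun x y ↦ ?_).trans (this.trans (by ring))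
    simp only [Prod.map, Prod.mk.injEq]
    grind
  have left : H[fun x ↦ (R.Z x.1.1, R.Z x.1.1 + S.Z x.1.2 + T.Z x.2,
      (R.B x.1.1, S.B x.1.2), T.B x.2); P] =
        R.entropy + (S + T).entropy + (H[R.B; R.p] + (H[S.B; S.p] + H[T.B; T.p])) := by
    rw [← rvEnt_B_add, ← rvEnt_indep_pair, ← rvEnt_comp_equiv (.prodAssoc ..) fun x ↦ mul_assoc ..]
    refine rvEnt_congr _ fun x y ↦ ?_
    simp only [Function.comp_apply, Equiv.prodAssoc_apply, add_Z, add_B, Prod.mk.injEq]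
    grind
  have right : H[fun x ↦ (T.Z x.2, R.Z x.1.1 + S.Z x.1.2 + T.Z x.2,
      (R.B x.1.1, S.B x.1.2), T.B x.2); P] =
        (R + S).entropy + T.entropy + (H[R.B; R.p] + H[S.B; S.p] + H[T.B; T.p]) := by
    rw [← rvEnt_B_add, ← rvEnt_indep_pair]
    refine rvEnt_congr _ fun x y ↦ ?_
    simp only [add_Z, add_B, Prod.mk.injEq]
    grind
  have base : H[fun x ↦ (R.Z x.1.1 + S.Z x.1.2 + T.Z x.2, (R.B x.1.1, S.B x.1.2), T.B x.2); P] =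
      (R + S + T).entropy + (H[R.B; R.p] + H[S.B; S.p] + H[T.B; T.p]) := by
    rw [← rvEnt_B_add]
    exact rvEnt_pair_add (R + S) T
  rw [joint, base, left, right] at sub
  linarith

theorem entropy_add_double_le (S T : CondVar G) :
    (S + (T + T)).entropy ≤ (S + T).entropy + (T + T).entropy - T.entropy := by
  have := entropy_add_add_le S T T
  rw [entropy_add_assoc] at this
  linarith

theorem entropy_double_double_le (T : CondVar G) :
    (T + T + (T + T)).entropy ≤ 3 * (T + T).entropy - 2 * T.entropy := by
  have h := entropy_add_double_le (T + T) T
  have h' := entropy_add_double_le T T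
  rw [entropy_add_comm] at h'
  linarith

theorem entropy_double_add_le (S T : CondVar G) :
    (S + T + (S + T)).entropy ≤ 3 * (S + T).entropy - S.entropy - T.entropy := by
  have h := entropy_add_add_le (S + T) S T
  have h' := entropy_add_add_le S T S
  rw [entropy_add_assoc] at h
  rw [entropy_add_comm T S] at h'
  linarith

end AddCommGroup

section Laws

variable {G : Type u}

/-- The distribution of `Z` conditioned on the event that `B` takes the value it has at `ω`. -/
def law (T : CondVar G) (ω : T.Ω) : G → ℝ := push T.Z (condOn T.p T.B (T.B ω))

theorem law_mem_stdSimplex [Fintype G] (T : CondVar G) {ω : T.Ω} (hω : T.p ω ≠ 0) :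
    T.law ω ∈ stdSimplex ℝ G :=
  push_mem_stdSimplex (condOn_mem_stdSimplex T.p_mem T.B hω) T.Z

theorem entropy_eq_sum (T : CondVar G) : T.entropy = ∑ ω, T.p ω * ent (T.law ω) :=
  rvCondEnt_eq_sum T.p_mem T.Z T.B

theorem law_ofLaw [Fintype G] (z : G → ℝ) (hz : z ∈ stdSimplex ℝ G) (ω : (ofLaw z hz).Ω) :
    (ofLaw z hz).law ω = z := by
  change push id (condOn z (fun _ ↦ PUnit.unit) PUnit.unit) = z
  classical
  ext x
  simp [condOn, push_apply, hz.2]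

theorem rvEnt_add_prodDist [AddCommGroup G] [Finite G] {Ω Ω' : Type*} [Finite Ω] [Finite Ω']
    (p : Ω → ℝ) (q : Ω' → ℝ) (f : Ω → G) (g : Ω' → G) :
    H[fun x ↦ f x.1 + g x.2; prodDist p q] = ent (conv (push f p) (push g q)) := by
  rw [conv_eq_push, ← push_prodMap_prodDist]
  exact (rvEnt_push (Prod.map f g) (fun x ↦ x.1 + x.2) (prodDist p q)).symm

theorem entropy_add_eq_sum [AddCommGroup G] [Finite G] (S T : CondVar G) :
    (S + T).entropy = ∑ ω, S.p ω * ∑ ω', T.p ω' * ent (conv (S.law ω) (T.law ω')) := by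
  refine (rvCondEnt_eq_sum (S + T).p_mem _ _).trans <| (sum_prodDist_mul _ _ _).trans ?_
  refine Finset.sum_congr rfl fun ω _ ↦ congrArg _ <|
    Finset.sum_congr rfl fun ω' _ ↦ congrArg _ ?_
  rw [law, law, ← rvEnt_add_prodDist, ← condOn_prodDist]
  rfl

theorem entropy_ofLaw_add [AddCommGroup G] [Fintype G] (z : G → ℝ) (hz : z ∈ stdSimplex ℝ G)
    (T : CondVar G) :
    (ofLaw z hz + T).entropy = ∑ ω, T.p ω * ent (conv z (T.law ω)) := by
  rw [entropy_add_eq_sum]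
  simp only [law_ofLaw]
  rw [← Finset.sum_mul]
  exact (congrArg (· * _) hz.2).trans (one_mul _)

theorem entropy_map_ofLaw_add_map_ofLaw {G' : Type u} [AddCommGroup G'] [Fintype G] [Finite G']
    (ρ : G → G') {z w : G → ℝ} (hz : z ∈ stdSimplex ℝ G) (hw : w ∈ stdSimplex ℝ G) :
    ((ofLaw z hz).map ρ + (ofLaw w hw).map ρ).entropy = ent (conv (push ρ z) (push ρ w)) := by
  rw [← rvEnt_add_prodDist]
  change H[fun x ↦ (ρ x.1 + ρ x.2, PUnit.unit, PUnit.unit); prodDist z w] -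
    H[fun _ ↦ (PUnit.unit, PUnit.unit); prodDist z w] = _
  rw [rvEnt_const (prodDist_mem_stdSimplex hz hw), sub_zero]
  exact rvEnt_congr _ (by grind)

theorem entropy_ofLaw_add_ofLaw [AddCommGroup G] [Fintype G] {z w : G → ℝ}
    (hz : z ∈ stdSimplex ℝ G) (hw : w ∈ stdSimplex ℝ G) :
    (ofLaw z hz + ofLaw w hw).entropy = ent (conv z w) := by
  refine (entropy_map_ofLaw_add_map_ofLaw id hz hw).trans ?_
  rw [push_id, push_id]

/-- The conditional entropy of the sum of two copies of `T` that are conditionally independent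
given a common value of the side information. -/
def diagEntropy [AddCommGroup G] (T : CondVar G) : ℝ :=
  H[fun x ↦ T.Z x.1 + T.Z x.2 | fun x ↦ T.B x.1; condCopies T.p T.B]

theorem diagEntropy_eq_sum [AddCommGroup G] [Finite G] (T : CondVar G) :
    T.diagEntropy = ∑ ω, T.p ω * ent (conv (T.law ω) (T.law ω)) := by
  rw [diagEntropy, rvCondEnt_condCopies T.p_mem]
  simp only [rvEnt_add_prodDist, law]

end Laws

section Fibring

variable {G : Type u} [AddCommGroup G]

/-- The defect in the fibring inequality `h(T_fib + T_fib) + h(4T) ≤ 2 h(2T)`. -/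
def fibringDefect (T : CondVar G) : ℝ :=
  2 * (T + T).entropy - (T + T + (T + T)).entropy - (T.fibre + T.fibre).entropy

theorem rvEnt_partialSum (T : CondVar G) :
    let P := prodDist (prodDist T.p T.p) (prodDist T.p T.p)
    let D := fun x : (T.Ω × T.Ω) × T.Ω × T.Ω ↦ (T.Z x.1.1 + T.Z x.1.2 + (T.Z x.2.1 + T.Z x.2.2),
      (T.B x.1.1, T.B x.1.2), T.B x.2.1, T.B x.2.2)
    let h := 2 * (T + T).entropy + 4 * H[T.B; T.p]
    H[fun x ↦ (T.Z x.1.1 + T.Z x.1.2, D x); P] = h ∧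
      H[fun x ↦ (T.Z x.1.1 + T.Z x.2.1, D x); P] = h ∧
        H[fun x ↦ (T.Z x.1.2 + T.Z x.2.1, D x); P] = h := by
  intro P D h
  have e₁ : H[fun x ↦ (T.Z x.1.1 + T.Z x.1.2, D x); P] = h := by
    have := rvEnt_indep_pair (T + T) (T + T)
    rw [rvEnt_B_add] at this
    refine (rvEnt_congr _ fun x y ↦ ?_).trans (this.trans (by ring))
    simp only [D, add_Z, add_B, Prod.mk.injEq]
    grind
  have e₂ : H[fun x ↦ (T.Z x.1.1 + T.Z x.2.1, D x); P] = h := by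
    rw [← e₁, ← rvEnt_comp_equiv (.prodProdProdComm ..) fun x ↦ mul_mul_mul_comm ..]
    refine rvEnt_congr _ fun x y ↦ ?_
    simp only [D, Function.comp_apply, Equiv.prodProdProdComm_apply, Prod.mk.injEq]
    grind
  refine ⟨e₁, e₂, ?_⟩
  rw [← e₂, ← rvEnt_comp_equiv (.prodCongr (.prodComm ..) (.refl _)) fun x ↦ ?_]
  · refine rvEnt_congr _ fun x y ↦ ?_
    simp only [D, Function.comp_apply, Equiv.prodCongr_apply, Prod.map, Equiv.prodComm_apply,
      Prod.swap, Equiv.refl_apply, Prod.mk.injEq]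
    grind
  · simp [P, prodDist, mul_comm]

theorem rvEnt_total (T : CondVar G) :
    H[fun x : (T.Ω × T.Ω) × T.Ω × T.Ω ↦ (T.Z x.1.1 + T.Z x.1.2 + (T.Z x.2.1 + T.Z x.2.2),
      (T.B x.1.1, T.B x.1.2), T.B x.2.1, T.B x.2.2);
      prodDist (prodDist T.p T.p) (prodDist T.p T.p)] =
      (T + T + (T + T)).entropy + 4 * H[T.B; T.p] := by
  refine (rvEnt_pair_add (T + T) (T + T)).trans ?_
  rw [rvEnt_B_add]
  ring

theorem rvEnt_fibre_add_fibre (T : CondVar G) :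
    H[fun x : (T.Ω × T.Ω) × T.Ω × T.Ω ↦ (T.Z x.1.1 + T.Z x.2.1, T.Z x.1.1 + T.Z x.1.2,
      T.Z x.1.1 + T.Z x.1.2 + (T.Z x.2.1 + T.Z x.2.2), (T.B x.1.1, T.B x.1.2),
        T.B x.2.1, T.B x.2.2);
      prodDist (prodDist T.p T.p) (prodDist T.p T.p)] =
      (T.fibre + T.fibre).entropy + (2 * (T + T).entropy + 4 * H[T.B; T.p]) := by
  have hB : H[T.fibre.B; T.fibre.p] = (T + T).entropy + 2 * H[T.B; T.p] := by
    rw [two_mul, ← rvEnt_pair_add]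
    rfl
  have h := rvEnt_pair_add T.fibre T.fibre
  rw [hB] at h
  refine (rvEnt_congr _ fun x y ↦ ?_).trans (h.trans (by ring))
  simp only [fibre, Prod.mk.injEq]
  grind

theorem fibringDefect_nonneg (T : CondVar G) : 0 ≤ T.fibringDefect := by
  have sub := rvEnt_submodular (T + T + (T + T)).p_mem (fun x ↦ T.Z x.1.1 + T.Z x.2.1)
    (fun x ↦ T.Z x.1.1 + T.Z x.1.2) fun x ↦ (T.Z x.1.1 + T.Z x.1.2 + (T.Z x.2.1 + T.Z x.2.2),
      (T.B x.1.1, T.B x.1.2), T.B x.2.1, T.B x.2.2)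
  obtain ⟨hC, hA, -⟩ := T.rvEnt_partialSum
  have := (add_le_add T.rvEnt_fibre_add_fibre.ge T.rvEnt_total.ge).trans
    (sub.trans (add_le_add hA.le hC.le))
  rw [fibringDefect]
  linarith

theorem diagEntropy_fibre_add_fibre (T : CondVar G) :
    let P := prodDist (prodDist T.p T.p) (prodDist T.p T.p)
    let A := fun x : (T.Ω × T.Ω) × T.Ω × T.Ω ↦ T.Z x.1.1 + T.Z x.2.1
    let c := fun x : (T.Ω × T.Ω) × T.Ω × T.Ω ↦ (T.Z x.1.1 + T.Z x.1.2,
      T.Z x.1.1 + T.Z x.1.2 + (T.Z x.2.1 + T.Z x.2.2), (T.B x.1.1, T.B x.1.2), T.B x.2.1, T.B x.2.2)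
    (T.fibre + T.fibre).diagEntropy = H[fun x ↦ A x.1 + A x.2 | fun x ↦ c x.1; condCopies P c] := by
  intro P A c
  let B := fun x : (T.Ω × T.Ω) × T.Ω × T.Ω ↦
    ((T.Z x.1.1 + T.Z x.1.2, T.B x.1.1, T.B x.1.2), T.Z x.2.1 + T.Z x.2.2, T.B x.2.1, T.B x.2.2)
  have hBc (x y) : B x = B y ↔ c x = c y := by
    simp only [B, c, Prod.mk.injEq]
    grind
  change H[fun x ↦ A x.1 + A x.2 | fun x ↦ B x.1; condCopies P B] = _
  rw [condCopies_congr P hBc]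
  exact congrArg₂ _ (rvEnt_congr _ fun x y ↦ by simp only [Prod.mk.injEq, hBc])
    (rvEnt_congr _ fun x y ↦ hBc x.1 y.1)

/-- In characteristic two the sums `Z₁₁ + Z₂₁`, `Z₁₁ + Z₁₂` and `Z₁₂ + Z₂₁` add up to zero, so the
entropic Balog–Szemerédi–Gowers inequality applies. -/
theorem diagEntropy_fibre_add_fibre_le [Module (ZMod 2) G] (T : CondVar G) :
    (T.fibre + T.fibre).diagEntropy ≤ (T.fibre + T.fibre).entropy + 3 * T.fibringDefect := by
  let P := prodDist (prodDist T.p T.p) (prodDist T.p T.p)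
  let A := fun x : (T.Ω × T.Ω) × T.Ω × T.Ω ↦ T.Z x.1.1 + T.Z x.2.1
  let C := fun x : (T.Ω × T.Ω) × T.Ω × T.Ω ↦ T.Z x.1.1 + T.Z x.1.2
  let D := fun x : (T.Ω × T.Ω) × T.Ω × T.Ω ↦ (T.Z x.1.1 + T.Z x.1.2 + (T.Z x.2.1 + T.Z x.2.2),
    (T.B x.1.1, T.B x.1.2), T.B x.2.1, T.B x.2.2)
  have third : (fun x ↦ A x + C x) = fun x ↦ T.Z x.1.2 + T.Z x.2.1 := by
    ext x
    simp only [A, C]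
    rw [add_add_add_comm, ZModModule.add_self, zero_add, add_comm]
  have bsg : (T.fibre + T.fibre).diagEntropy ≤
      2 * H[A | D; P] + 2 * H[fun x ↦ A x + C x | D; P] + H[C | D; P] -
        2 * H[fun x ↦ (A x, C x) | D; P] :=
    T.diagEntropy_fibre_add_fibre.le.trans
      (rvCondEnt_add_condCopies_le (T + T + (T + T)).p_mem A C D)
  obtain ⟨hC, hA, hAC⟩ := T.rvEnt_partialSum
  have joint : H[fun x ↦ ((A x, C x), D x); P] = _ :=
    (rvEnt_congr _ (by grind)).trans T.rvEnt_fibre_add_fibre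
  have total : H[D; P] = _ := T.rvEnt_total
  rw [third] at bsg
  simp only [rvCondEnt] at bsg
  rw [joint, total] at bsg
  rw [fibringDefect]
  linarith

end Fibring

end CondVar

section RuzsaDistance

variable {G : Type u} [AddCommGroup G]

namespace CondVar

/-- The conditional entropic Ruzsa distance, which for unconditioned variables is `dRuzsa`. -/
def ruzsaDist (S T : CondVar G) : ℝ := (S + T).entropy - S.entropy / 2 - T.entropy / 2

theorem ruzsaDist_nonneg (S T : CondVar G) : 0 ≤ ruzsaDist S T := by
  have hS := entropy_le_add S T
  have hT := entropy_le_add T S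
  rw [entropy_add_comm] at hT
  rw [ruzsaDist]
  linarith

theorem ruzsaDist_ofLaw [Fintype G] {z w : G → ℝ} (hz : z ∈ stdSimplex ℝ G)
    (hw : w ∈ stdSimplex ℝ G) : ruzsaDist (ofLaw z hz) (ofLaw w hw) = dRuzsa z w := by
  rw [ruzsaDist, entropy_ofLaw_add_ofLaw, entropy_ofLaw, entropy_ofLaw, dRuzsa]

theorem sum_mul_sum_dRuzsa_law [Finite G] (S T : CondVar G) :
    ∑ ω, S.p ω * ∑ ω', T.p ω' * dRuzsa (S.law ω) (T.law ω') = ruzsaDist S T := by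
  rw [ruzsaDist, entropy_add_eq_sum, S.entropy_eq_sum, T.entropy_eq_sum]
  simp only [dRuzsa, mul_sub, Finset.sum_sub_distrib, ← Finset.sum_mul, T.p_mem.2, S.p_mem.2,
    one_mul, ← mul_div_assoc, ← Finset.sum_div]

theorem sum_dRuzsa_law_right [Fintype G] {a : G → ℝ} (ha : a ∈ stdSimplex ℝ G) (T : CondVar G) :
    ∑ ω, T.p ω * dRuzsa a (T.law ω) = ruzsaDist (ofLaw a ha) T := by
  rw [← sum_mul_sum_dRuzsa_law]
  simp only [law_ofLaw]
  rw [← Finset.sum_mul]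
  exact ((congrArg (· * _) ha.2).trans (one_mul _)).symm

theorem sum_dRuzsa_law_self [Finite G] (T : CondVar G) :
    ∑ ω, T.p ω * dRuzsa (T.law ω) (T.law ω) = T.diagEntropy - T.entropy := by
  rw [diagEntropy_eq_sum, entropy_eq_sum, ← Finset.sum_sub_distrib]
  refine Finset.sum_congr rfl fun ω _ ↦ ?_
  rw [dRuzsa]
  ring

end CondVar

variable [Fintype G] {z w : G → ℝ}

theorem dRuzsa_nonneg (hz : z ∈ stdSimplex ℝ G) (hw : w ∈ stdSimplex ℝ G) : 0 ≤ dRuzsa z w := by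
  rw [← CondVar.ruzsaDist_ofLaw hz hw]
  exact CondVar.ruzsaDist_nonneg _ _

theorem ent_le_ent_conv_left (hz : z ∈ stdSimplex ℝ G) (hw : w ∈ stdSimplex ℝ G) :
    ent z ≤ ent (conv z w) := by
  rw [← CondVar.entropy_ofLaw_add_ofLaw hz hw, ← CondVar.entropy_ofLaw z hz]
  exact CondVar.entropy_le_add _ _

theorem ent_le_ent_conv_right (hz : z ∈ stdSimplex ℝ G) (hw : w ∈ stdSimplex ℝ G) :
    ent w ≤ ent (conv z w) := by
  rw [← CondVar.entropy_ofLaw_add_ofLaw hz hw, CondVar.entropy_add_comm,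
    ← CondVar.entropy_ofLaw w hw]
  exact CondVar.entropy_le_add _ _

end RuzsaDistance

section Minimisers

theorem exists_eq_zero_of_forall_penalty {X : Type*} [TopologicalSpace X] [T2Space X] {K : Set X}
    (hK : IsCompact K) {f d : X → ℝ} (hf : Continuous f) (hd : Continuous d)
    (hd_nonneg : ∀ x ∈ K, 0 ≤ d x) {m : ℝ}
    (h : ∀ N : ℕ, ∀ e > 0, ∃ x ∈ K, f x + N * d x ≤ m + e) : ∃ x ∈ K, d x = 0 ∧ f x ≤ m := by
  let t (N : ℕ) : Set X := K ∩ {x | f x + N * d x ≤ m + 1 / (N + 1)}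
  have ht (N : ℕ) : IsClosed {x | f x + N * d x ≤ m + 1 / (N + 1)} :=
    isClosed_le (by fun_prop) continuous_const
  have anti (N : ℕ) : t (N + 1) ⊆ t N := by
    rintro x ⟨hx, hle⟩
    refine ⟨hx, ?_⟩
    have hdx := hd_nonneg x hx
    have := one_div_le_one_div_of_le (by positivity) (by linarith : (N + 1 : ℝ) ≤ N + 1 + 1)
    simp only [Set.mem_ofPred_eq, Nat.cast_add, Nat.cast_one] at hle ⊢
    linarith
  obtain ⟨x, hx⟩ := IsCompact.nonempty_iInter_of_sequence_nonempty_isCompact_isClosed t anti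
    (fun N ↦ h N _ (by positivity)) (hK.inter_right (ht 0)) fun N ↦ hK.isClosed.inter (ht N)
  have hxK : x ∈ K := (Set.mem_iInter.1 hx 0).1
  have hle (N : ℕ) : f x + N * d x ≤ m + 1 / (N + 1) := (Set.mem_iInter.1 hx N).2
  have hdx := hd_nonneg x hxK
  refine ⟨x, hxK, hdx.antisymm' (not_lt.1 fun pos ↦ ?_), le_of_forall_pos_le_add fun e he ↦ ?_⟩
  · obtain ⟨N, hN⟩ := exists_nat_gt ((m + 1 - f x) / d x)
    have : (1 : ℝ) / (N + 1) ≤ 1 := div_le_one_of_le₀ (by linarith [N.cast_nonneg (α := ℝ)])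
      (by positivity)
    linarith [hle N, (div_lt_iff₀ pos).1 hN]
  · obtain ⟨N, hN⟩ := exists_nat_one_div_lt he
    linarith [hle N, mul_nonneg N.cast_nonneg hdx]

theorem continuous_ent {Ω : Type*} [Finite Ω] : Continuous (ent : (Ω → ℝ) → ℝ) := by
  have := Fintype.ofFinite Ω
  simp only [funext ent_eq_sum]
  fun_prop

theorem continuous_dRuzsa {G X : Type*} [AddGroup G] [Finite G] [TopologicalSpace X]
    {z w : X → G → ℝ} (hz : Continuous z) (hw : Continuous w) :
    Continuous fun x ↦ dRuzsa (z x) (w x) := by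
  have := Fintype.ofFinite G
  have hconv : Continuous fun x ↦ conv (z x) (w x) := by
    refine continuous_pi fun g ↦ ?_
    simp only [conv, finsum_eq_sum_of_fintype]
    fun_prop
  exact ((continuous_ent.comp hconv).sub ((continuous_ent.comp hz).div_const 2)).sub
    ((continuous_ent.comp hw).div_const 2)

variable {G : Type u} [AddCommGroup G]

namespace CondVar

/-- The `τ`-functional of Green, Gowers, Manners and Tao with weight `1/16`, for two independent
copies of `T` and the reference variable `A`. -/
def tau (A T : CondVar G) : ℝ := ruzsaDist T T + ruzsaDist A T / 8

variable [Fintype G] {a : G → ℝ} {m ξ : ℝ}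

theorem le_diagEntropy_of_forall_le_tau (ha : a ∈ stdSimplex ℝ G)
    (hm : ∀ S, m ≤ tau (ofLaw a ha) S) (T : CondVar G) :
    m ≤ T.diagEntropy - T.entropy + ruzsaDist (ofLaw a ha) T / 8 := by
  rw [← sum_dRuzsa_law_self, ← sum_dRuzsa_law_right ha, Finset.sum_div, ← Finset.sum_add_distrib,
    ← one_mul m, ← T.p_mem.2, Finset.sum_mul]
  refine Finset.sum_le_sum fun ω _ ↦ ?_
  obtain hω | hω := eq_or_ne (T.p ω) 0
  · simp [hω]
  · have := hm (ofLaw _ (T.law_mem_stdSimplex hω))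
    rw [tau, ruzsaDist_ofLaw, ruzsaDist_ofLaw] at this
    rw [mul_div_assoc, ← mul_add]
    exact mul_le_mul_of_nonneg_left this (T.p_mem.1 ω)

/-- Compare `T` with the competitors `T + T`, `T.fibre` and the laws of `T.fibre + T.fibre`. -/
theorem ruzsaDist_self_le_of_tau_le [Module (ZMod 2) G] (ha : a ∈ stdSimplex ℝ G)
    (hm : ∀ S, m ≤ tau (ofLaw a ha) S) {T : CondVar G} (hT : tau (ofLaw a ha) T ≤ m + ξ) :
    ruzsaDist T T ≤ 17 * ξ := by
  set A := ofLaw a ha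
  have double := hm (T + T)
  have fib := hm T.fibre
  have diag := le_diagEntropy_of_forall_le_tau ha hm (T.fibre + T.fibre)
  have e₁ := entropy_add_double_le A T
  have e₂ := ((Refines.refl A).add T.fibre_refines).entropy_le
  have e₃ := ((Refines.refl A).add (T.fibre_refines.add T.fibre_refines)).entropy_le
  have e₄ := T.entropy_fibre
  have defect := T.fibringDefect_nonneg
  have bsg := T.diagEntropy_fibre_add_fibre_le
  simp only [fibringDefect, tau, ruzsaDist] at *
  linarith

theorem exists_law_pair_le_of_tau_le (ha : a ∈ stdSimplex ℝ G) (N : ℕ) {T : CondVar G}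
    (hT : tau (ofLaw a ha) T ≤ m + ξ) (hd : ruzsaDist T T ≤ 17 * ξ) :
    ∃ z w, z ∈ stdSimplex ℝ G ∧ w ∈ stdSimplex ℝ G ∧
      dRuzsa z w + (dRuzsa a z + dRuzsa a w) / 16 + N * dRuzsa z w ≤ m + ξ * (1 + 17 * N) := by
  let D (x : T.Ω × T.Ω) := dRuzsa (T.law x.1) (T.law x.2)
  let F (ω : T.Ω) := dRuzsa a (T.law ω)
  have hF : ∑ ω, T.p ω * F ω = ruzsaDist (ofLaw a ha) T := sum_dRuzsa_law_right ha T
  have hD : ∑ x, prodDist T.p T.p x * D x = ruzsaDist T T :=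
    (sum_prodDist_mul ..).trans (sum_mul_sum_dRuzsa_law T T)
  have hF₁ : ∑ x : T.Ω × T.Ω, prodDist T.p T.p x * F x.1 = ruzsaDist (ofLaw a ha) T := by
    rw [sum_prodDist_mul, ← hF]
    simp only [← Finset.sum_mul, T.p_mem.2, one_mul]
  have hF₂ : ∑ x : T.Ω × T.Ω, prodDist T.p T.p x * F x.2 = ruzsaDist (ofLaw a ha) T := by
    rw [sum_prodDist_mul, ← hF]
    simp only [← Finset.sum_mul, T.p_mem.2, one_mul]
  have average : ∑ x : T.Ω × T.Ω, prodDist T.p T.p x * (D x + (F x.1 + F x.2) / 16 + N * D x) ≤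
      m + ξ * (1 + 17 * N) := by
    calc
      _ = (1 + N) * ∑ x, prodDist T.p T.p x * D x +
          (∑ x : T.Ω × T.Ω, prodDist T.p T.p x * F x.1 +
            ∑ x : T.Ω × T.Ω, prodDist T.p T.p x * F x.2) / 16 := by
        simp only [Finset.mul_sum, Finset.sum_div, ← Finset.sum_add_distrib]
        exact Finset.sum_congr rfl fun x _ ↦ by ring
      _ = tau (ofLaw a ha) T + N * ruzsaDist T T := by rw [hD, hF₁, hF₂, tau]; ring
      _ ≤ m + ξ + N * (17 * ξ) := by gcongr
      _ = m + ξ * (1 + 17 * N) := by ring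
  obtain ⟨x, hx, hle⟩ := exists_le_of_sum_mul_le (T + T).p_mem average
  exact ⟨_, _, T.law_mem_stdSimplex (left_ne_zero_of_mul hx),
    T.law_mem_stdSimplex (right_ne_zero_of_mul hx), hle⟩

end CondVar

theorem exists_dRuzsa_eq_zero [Fintype G] [Module (ZMod 2) G] {a : G → ℝ}
    (ha : a ∈ stdSimplex ℝ G) :
    ∃ z w, z ∈ stdSimplex ℝ G ∧ w ∈ stdSimplex ℝ G ∧ dRuzsa z w = 0 ∧
      (dRuzsa a z + dRuzsa a w) / 16 ≤ 9 / 8 * dRuzsa a a := by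
  set A := CondVar.ofLaw a ha
  set m := sInf (Set.range A.tau)
  have hm (S) : m ≤ A.tau S := csInf_le ⟨0, Set.forall_mem_range.2 fun T ↦
    add_nonneg (T.ruzsaDist_nonneg T) (div_nonneg (A.ruzsaDist_nonneg T) (by norm_num))⟩ ⟨S, rfl⟩
  have hK := (isCompact_stdSimplex ℝ G).prod (isCompact_stdSimplex ℝ G)
  have near (N : ℕ) (e : ℝ) (he : 0 < e) : ∃ x ∈ stdSimplex ℝ G ×ˢ stdSimplex ℝ G,
      dRuzsa x.1 x.2 + (dRuzsa a x.1 + dRuzsa a x.2) / 16 + N * dRuzsa x.1 x.2 ≤ m + e := by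
    have hN : (0 : ℝ) < 1 + 17 * N := by positivity
    obtain ⟨_, ⟨T, rfl⟩, hT⟩ := Real.lt_sInf_add_pos (Set.range_nonempty (h := ⟨A⟩) A.tau)
      (div_pos he hN)
    obtain ⟨z, w, hz, hw, hle⟩ := CondVar.exists_law_pair_le_of_tau_le ha N hT.le
      (CondVar.ruzsaDist_self_le_of_tau_le ha hm hT.le)
    rw [div_mul_cancel₀ _ hN.ne'] at hle
    exact ⟨(z, w), ⟨hz, hw⟩, hle⟩
  obtain ⟨⟨z, w⟩, ⟨hz, hw⟩, hd, hle⟩ := exists_eq_zero_of_forall_penalty hK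
    (((continuous_dRuzsa continuous_fst continuous_snd).add
      (((continuous_dRuzsa continuous_const continuous_fst).add
        (continuous_dRuzsa continuous_const continuous_snd)).div_const 16)))
    (continuous_dRuzsa continuous_fst continuous_snd)
    (fun x hx ↦ dRuzsa_nonneg hx.1 hx.2) near
  have hA := hm A
  rw [CondVar.tau, CondVar.ruzsaDist_ofLaw] at hA
  refine ⟨z, w, hz, hw, hd, ?_⟩
  calc
    _ = dRuzsa z w + (dRuzsa a z + dRuzsa a w) / 16 := by rw [show dRuzsa z w = 0 from hd, zero_add]
    _ ≤ m := hle
    _ ≤ _ := by linarith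

end Minimisers

section Periods

variable {G : Type u} [AddCommGroup G] {s : G → ℝ}

/-- The subgroup of periods of a function on an elementary abelian 2-group. -/
def periods [Module (ZMod 2) G] {α : Type*} (w : G → α) : Submodule (ZMod 2) G :=
  AddSubgroup.toZModSubmodule 2
    { carrier := {c | Function.Periodic w c}
      add_mem' := Function.Periodic.add_period
      zero_mem' := Function.periodic_with_period_zero w
      neg_mem' := Function.Periodic.neg }

variable {R : Type*} [Ring R] [Module R G]

theorem sum_comp_mkQ [Fintype G] (V : Submodule R G) [Fintype (G ⧸ V)] (F : G ⧸ V → ℝ) :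
    ∑ x, F (V.mkQ x) = Nat.card V * ∑ q, F q := by
  have := Fintype.ofFinite V
  let e : G ≃ (G ⧸ V) × V :=
    AddSubgroup.addGroupEquivQuotientProdAddSubgroup (s := V.toAddSubgroup)
  calc
    _ = ∑ y : (G ⧸ V) × V, F y.1 := e.sum_comp fun y ↦ F y.1
    _ = _ := by
      rw [Fintype.sum_prod_type, Finset.mul_sum]
      simp only [Finset.sum_const, Finset.card_univ, Nat.card_eq_fintype_card, nsmul_eq_mul]

theorem ent_le_log_card_add [Fintype G] (hs : s ∈ stdSimplex ℝ G) (V : Submodule R G) :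
    ent s ≤ log (Nat.card V) + H[V.mkQ; s] := by
  have := Fintype.ofFinite (G ⧸ V)
  have card_pos : (0 : ℝ) < Nat.card V := by exact_mod_cast Nat.card_pos
  have gibbs := rvEnt_le_crossEntropy hs (f := id) (S := Finset.univ)
    (φ := fun x ↦ push V.mkQ s (V.mkQ x) / Nat.card V) (fun _ _ ↦ Finset.mem_univ _)
    (fun x _ ↦ div_nonneg (push_nonneg hs _ _) card_pos.le)
    (fun x hx ↦ div_pos (push_pos hs _ hx) card_pos) (by
      rw [← Finset.sum_div, sum_comp_mkQ, (push_mem_stdSimplex hs _).2, mul_one,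
        div_self card_pos.ne'])
  refine (rvEnt_id s).ge.trans (gibbs.trans_eq ?_)
  rw [rvEnt_eq_sum, ← one_mul (log (Nat.card V : ℝ)), ← hs.2, Finset.sum_mul,
    ← Finset.sum_add_distrib]
  refine Finset.sum_congr rfl fun x _ ↦ ?_
  obtain hx | hx := eq_or_ne (s x) 0
  · simp [hx]
  · rw [id, log_div (push_pos hs _ hx).ne' card_pos.ne']
    ring

theorem push_mkQ_of_periodic [Finite G] {V : Submodule R G}
    (hV : ∀ c ∈ V, Function.Periodic s c) (g : G) : push V.mkQ s (V.mkQ g) = Nat.card V * s g := by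
  classical
  have := Fintype.ofFinite G
  have := Fintype.ofFinite (G ⧸ V)
  calc
    _ = ∑ x, if V.mkQ x = V.mkQ g then s g else 0 := by
      rw [push_apply]
      refine Finset.sum_congr rfl fun x _ ↦ if_ctx_congr Iff.rfl (fun h ↦ ?_) fun _ ↦ rfl
      have := hV _ ((Submodule.Quotient.eq V).1 h) g
      rwa [add_sub_cancel] at this
    _ = _ := by
      rw [sum_comp_mkQ V fun q ↦ if q = V.mkQ g then s g else 0, Finset.sum_ite_eq' Finset.univ,
        if_pos (Finset.mem_univ _)]

theorem ent_eq_log_card_add [Fintype G] (hs : s ∈ stdSimplex ℝ G) {V : Submodule R G}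
    (hV : ∀ c ∈ V, Function.Periodic s c) : ent s = log (Nat.card V) + H[V.mkQ; s] := by
  have card_pos : (0 : ℝ) < Nat.card V := by exact_mod_cast Nat.card_pos
  rw [rvEnt_eq_sum, ← one_mul (log (Nat.card V : ℝ)), ← hs.2, Finset.sum_mul,
    ← Finset.sum_add_distrib, ent_eq_sum]
  refine Finset.sum_congr rfl fun x _ ↦ ?_
  obtain hx | hx := eq_or_ne (s x) 0
  · simp [hx]
  · rw [push_mkQ_of_periodic hV, log_mul card_pos.ne' hx, negMulLog]
    ring

theorem apply_sub_eq_of_ent_conv_eq [Fintype G] {z w : G → ℝ} (hz : z ∈ stdSimplex ℝ G)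
    (hw : w ∈ stdSimplex ℝ G) (h : ent (conv z w) = ent w) {x y : G} (hx : z x ≠ 0) (hy : z y ≠ 0)
    (g : G) : w (g - x) = w (g - y) := by
  have conv_apply g : conv z w g = ∑ x, z x • w (g - x) := finsum_eq_sum_of_fintype _
  have nonneg (g x : G) : w (g - x) ∈ Set.Ici 0 := hw.1 _
  have jensen g : ∑ x, z x • negMulLog (w (g - x)) ≤ negMulLog (∑ x, z x • w (g - x)) :=
    concaveOn_negMulLog.le_map_sum (fun x _ ↦ hz.1 x) hz.2 fun x _ ↦ nonneg g x
  have sum_translates : ∑ g, ∑ x, z x • negMulLog (w (g - x)) = ent w := by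
    have translate (x : G) : ∑ g, negMulLog (w (g - x)) = ent w :=
      ((Equiv.subRight x).sum_comp fun g ↦ negMulLog (w g)).trans (ent_eq_sum w).symm
    rw [Finset.sum_comm]
    simp only [← Finset.smul_sum, translate, ← Finset.sum_smul, hz.2, one_smul]
  have sum_eq : ∑ g, ∑ x, z x • negMulLog (w (g - x)) =
      ∑ g, negMulLog (∑ x, z x • w (g - x)) := by
    rw [sum_translates, ← h, ent_eq_sum]
    simp only [conv_apply]
  have jensen_eq := (Finset.sum_eq_sum_iff_of_le fun g _ ↦ jensen g).1 sum_eq g (Finset.mem_univ g)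
  have eq_mean := (strictConcaveOn_negMulLog.map_sum_eq_iff' (fun x _ ↦ hz.1 x) hz.2
    fun x _ ↦ nonneg g x).1 jensen_eq.symm
  exact (eq_mean x (Finset.mem_univ x) hx).trans (eq_mean y (Finset.mem_univ y) hy).symm

theorem CondVar.entropy_sub_map_add_map_le {G' : Type u} [AddCommGroup G'] (ρ : G →+ G')
    (S T : CondVar G) : S.entropy - (S.map ρ).entropy + (T.map ρ).entropy ≤ (S + T).entropy := by
  have h := entropy_sub_map_le_add ρ S T
  have h' := entropy_le_add (T.map ρ) (S.map ρ)
  rw [entropy_add_comm, ← CondVar.map_add] at h'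
  linarith

theorem ent_sub_add_le_ent_conv [Fintype G] {a z : G → ℝ} (ha : a ∈ stdSimplex ℝ G)
    (hz : z ∈ stdSimplex ℝ G) (V : Submodule R G) :
    ent z - H[V.mkQ; z] + H[V.mkQ; a] ≤ ent (conv a z) := by
  have h := CondVar.entropy_sub_map_add_map_le V.mkQ.toAddMonoidHom (.ofLaw z hz) (.ofLaw a ha)
  rw [CondVar.entropy_add_comm, CondVar.entropy_ofLaw_add_ofLaw, CondVar.entropy_ofLaw,
    CondVar.entropy_map_ofLaw, CondVar.entropy_map_ofLaw] at h
  exact h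

theorem rvEnt_mkQ_periods_eq_zero [Fintype G] [Module (ZMod 2) G] {z w : G → ℝ}
    (hz : z ∈ stdSimplex ℝ G) (hw : w ∈ stdSimplex ℝ G) (h : ent (conv z w) = ent w) :
    H[(periods w).mkQ; z] = 0 := by
  have coset {x y : G} (hx : z x ≠ 0) (hy : z y ≠ 0) : (periods w).mkQ x = (periods w).mkQ y := by
    refine (Submodule.Quotient.eq _).2 fun g ↦ ?_
    convert apply_sub_eq_of_ent_conv_eq hz hw h hy hx (g + x) using 2 <;> abel
  exact (rvEnt_congr_of_support hz fun _ _ hx hy ↦ iff_of_true (coset hx hy) rfl).trans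
    (rvEnt_const hz ())

theorem exists_submodule_rvEnt_mkQ_le [Fintype G] [Module (ZMod 2) G] {a : G → ℝ}
    (ha : a ∈ stdSimplex ℝ G) :
    ∃ V : Submodule (ZMod 2) G, H[V.mkQ; a] ≤ 18 * (ent (conv a a) - ent a) ∧
      log (Nat.card V) ≤ ent a + 18 * (ent (conv a a) - ent a) := by
  obtain ⟨z, w, hz, hw, dist_zero, dist_le⟩ := exists_dRuzsa_eq_zero ha
  have z_le := ent_le_ent_conv_left hz hw
  have w_le := ent_le_ent_conv_right hz hw
  simp only [dRuzsa] at dist_zero dist_le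
  have z_zero := rvEnt_mkQ_periods_eq_zero hz hw (by linarith)
  have w_eq := ent_eq_log_card_add hw (V := periods w) fun _ ↦ id
  have az := ent_sub_add_le_ent_conv ha hz (periods w)
  have aw := ent_sub_add_le_ent_conv ha hw (periods w)
  have a_le := ent_le_log_card_add ha (periods w)
  have a_nonneg := rvEnt_nonneg ha (periods w).mkQ
  exact ⟨periods w, by linarith, by linarith⟩

end Periods

section Doubling

namespace CondVar

variable {G : Type u} [AddCommGroup G]

theorem exists_submodule_log_card_lt [Finite G] [Module (ZMod 2) G] {Q : CondVar G} {δ : ℝ}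
    (hδ : 0 ≤ δ) (hδ_le : δ ≤ 1)
    (h : 36 * (Q.diagEntropy - Q.entropy) + δ * Q.entropy < 2 * Q.entropy - (Q + Q).entropy) :
    ∃ V : Submodule (ZMod 2) G, δ * log (Nat.card V) < Q.entropy - (Q.map V.mkQ).entropy := by
  have := Fintype.ofFinite G
  have average : ∑ ω, Q.p ω * (36 * ent (conv (Q.law ω) (Q.law ω)) - (37 - δ) * ent (Q.law ω) +
      ∑ ω', Q.p ω' * ent (conv (Q.law ω) (Q.law ω'))) =
      36 * Q.diagEntropy - (37 - δ) * Q.entropy + (Q + Q).entropy := by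
    rw [diagEntropy_eq_sum, entropy_add_eq_sum, Q.entropy_eq_sum, Finset.mul_sum, Finset.mul_sum,
      ← Finset.sum_sub_distrib, ← Finset.sum_add_distrib]
    exact Finset.sum_congr rfl fun ω _ ↦ by ring
  obtain ⟨ω, hω, hω_le⟩ := exists_le_of_sum_mul_le Q.p_mem average.le
  have hz := Q.law_mem_stdSimplex hω
  set z := Q.law ω
  obtain ⟨V, hV, hV_card⟩ := exists_submodule_rvEnt_mkQ_le hz
  refine ⟨V, ?_⟩
  have drop := entropy_sub_map_add_map_le V.mkQ.toAddMonoidHom (ofLaw z hz) Q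
  rw [entropy_ofLaw_add, entropy_ofLaw, entropy_map_ofLaw] at drop
  change ent z - H[V.mkQ; z] + (Q.map V.mkQ).entropy ≤ _ at drop
  have z_le := ent_le_ent_conv_left hz hz
  have := mul_le_mul_of_nonneg_left hV_card hδ
  have := mul_le_mul_of_nonneg_right hδ_le (sub_nonneg.2 z_le)
  linarith

theorem exists_submodule_of_stationary [Finite G] [Module (ZMod 2) G] {T : CondVar G} {σ δ : ℝ}
    (hT : 0 < T.entropy) (hδ : 0 < δ) (hσ : (T + T).entropy = σ * T.entropy) (hσ_le : σ ≤ 2)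
    (hσδ : 250 * δ ≤ (2 - σ) ^ 2)
    (double_ge : (σ - δ) * (T + T).entropy ≤ (T + T + (T + T)).entropy)
    (fibre_ge : (σ - δ) * T.fibre.entropy ≤ (T.fibre + T.fibre).entropy) :
    ∃ V : Submodule (ZMod 2) G,
      δ * log (Nat.card V) < (T + T).entropy - ((T + T).map V.mkQ).entropy := by
  have one_le : 1 ≤ σ := by
    refine le_of_mul_le_mul_right ?_ hT
    rw [one_mul, ← hσ]
    exact entropy_le_add T T
  have δ_le : δ ≤ 1 := by nlinarith
  have fibre_eq : T.fibre.entropy = (2 - σ) * T.entropy := by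
    rw [entropy_fibre, hσ]
    ring
  have defect_nonneg := T.fibringDefect_nonneg
  have diag_le := T.diagEntropy_fibre_add_fibre_le
  have double_double_le := T.fibre.entropy_double_double_le
  have fibre_double_le := entropy_add_le T.fibre T.fibre
  set Q := T.fibre + T.fibre
  rw [fibre_eq] at fibre_ge double_double_le fibre_double_le
  rw [hσ] at double_ge
  have defect_eq : T.fibringDefect = 2 * (σ * T.entropy) - (T + T + (T + T)).entropy - Q.entropy :=
    hσ ▸ rfl
  have defect_le : T.fibringDefect ≤ 2 * δ * T.entropy := by linarith
  have saving : ((2 - σ) ^ 2 - 2 * δ) * T.entropy ≤ 2 * Q.entropy - (Q + Q).entropy := by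
    have := mul_le_mul_of_nonneg_right hσ_le (mul_pos hδ hT).le
    linarith
  have Q_le : δ * Q.entropy ≤ δ * (2 * T.entropy) := by
    refine mul_le_mul_of_nonneg_left ?_ hδ.le
    nlinarith
  have gap := mul_le_mul_of_nonneg_right hσδ hT.le
  have δT_pos := mul_pos hδ hT
  obtain ⟨V, hV⟩ := exists_submodule_log_card_lt hδ.le δ_le (Q := Q) <| by
    linarith only [diag_le, defect_le, saving, Q_le, gap, δT_pos]
  exact ⟨V, hV.trans_le <| (T.fibre_refines.add T.fibre_refines).entropy_sub_map_le V.mkQ⟩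

/-- The sum of `2 ^ j` independent copies of `T`. -/
def iterDouble (j : ℕ) (T : CondVar G) : CondVar G := (fun S ↦ S + S)^[j] T

theorem Refines.iterDouble {S T : CondVar G} (h : S.Refines T) (j : ℕ) :
    (S.iterDouble j).Refines (T.iterDouble j) := by
  induction j generalizing S T with
  | zero => exact h
  | succ _ ih => exact ih (h.add h)

theorem map_iterDouble {G' : Type u} [AddCommGroup G'] (ρ : G →+ G') (j : ℕ) (T : CondVar G) :
    (T.iterDouble j).map ρ = (T.map ρ).iterDouble j :=
  Function.Semiconj.iterate_right (fun S ↦ CondVar.map_add ρ S S) j T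

theorem entropy_iterDouble_le (j : ℕ) (T : CondVar G) :
    (T.iterDouble j).entropy ≤ 2 ^ j * T.entropy := by
  induction j generalizing T with
  | zero => exact (one_mul _).ge
  | succ _ ih =>
    have := entropy_add_le T T
    rw [pow_succ, mul_assoc, two_mul]
    exact (ih (T + T)).trans (by gcongr)

theorem exists_iterDouble_submodule [Finite G] [Module (ZMod 2) G] {ε δ : ℝ} (hε : 0 < ε)
    (hδ : 0 < δ) (hδε : 250 * δ ≤ ε ^ 2) (n : ℕ) {T : CondVar G} (hT : 0 < T.entropy)
    (double_le : (T + T).entropy ≤ (2 - ε) * T.entropy)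
    (double_lt : (T + T).entropy < (1 + n * δ) * T.entropy) :
    ∃ j ≤ n, ∃ V : Submodule (ZMod 2) G,
      δ * log (Nat.card V) < (T.iterDouble j).entropy - ((T.iterDouble j).map V.mkQ).entropy := by
  induction n generalizing T with
  | zero =>
    have := entropy_le_add T T
    rw [Nat.cast_zero, zero_mul, add_zero, one_mul] at double_lt
    linarith
  | succ n ih =>
    obtain ⟨σ, hσ⟩ : ∃ σ, (T + T).entropy = σ * T.entropy := ⟨_, (div_mul_cancel₀ _ hT.ne').symm⟩
    have σ_le : σ ≤ 2 - ε := le_of_mul_le_mul_right (hσ ▸ double_le) hT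
    have σ_lt : σ < 1 + (n + 1) * δ :=
      lt_of_mul_lt_mul_right (hσ ▸ Nat.cast_succ (R := ℝ) n ▸ double_lt) hT.le
    have double_pos := hT.trans_le (entropy_le_add T T)
    have fibre_pos : 0 < T.fibre.entropy := by
      rw [entropy_fibre, hσ, ← sub_mul]
      exact mul_pos (by linarith) hT
    by_cases double_ge : (σ - δ) * (T + T).entropy ≤ (T + T + (T + T)).entropy
    · by_cases fibre_ge : (σ - δ) * T.fibre.entropy ≤ (T.fibre + T.fibre).entropy
      · exact ⟨1, by lia, exists_submodule_of_stationary hT hδ hσ (by linarith) (by nlinarith)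
          double_ge fibre_ge⟩
      · rw [not_le] at fibre_ge
        obtain ⟨j, hj, V, hV⟩ := ih fibre_pos
          (fibre_ge.le.trans (mul_le_mul_of_nonneg_right (by linarith) fibre_pos.le))
          (fibre_ge.trans_le (mul_le_mul_of_nonneg_right (by linarith) fibre_pos.le))
        exact ⟨j, by lia, V, hV.trans_le ((T.fibre_refines.iterDouble j).entropy_sub_map_le _)⟩
    · rw [not_le] at double_ge
      obtain ⟨j, hj, hV⟩ := ih double_pos
        (double_ge.le.trans (mul_le_mul_of_nonneg_right (by linarith) double_pos.le))
        (double_ge.trans_le (mul_le_mul_of_nonneg_right (by linarith) double_pos.le))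
      exact ⟨j + 1, by lia, hV⟩

variable {R : Type*} [Ring R] [Module R G]

/-- The potential of a subspace `V` in the energy decrement argument: it decreases from `V` to a
subspace `W ≥ V` when `δ * (log |W| - log |V|)` is less than the entropy lost in passing from
`G ⧸ V` to `G ⧸ W` by one of the sums of `1, 2, 4, …, 2 ^ N` copies of `T`. -/
def potential (T : CondVar G) (δ : ℝ) (N : ℕ) (V : Submodule R G) : ℝ :=
  ∑ j ∈ Finset.range (N + 1), ((T.iterDouble j).map V.mkQ).entropy + δ * log (Nat.card V)

theorem mul_log_card_le_potential (T : CondVar G) (δ : ℝ) (N : ℕ) (V : Submodule R G) :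
    δ * log (Nat.card V) ≤ T.potential δ N V :=
  le_add_of_nonneg_left (Finset.sum_nonneg fun _ _ ↦ entropy_nonneg _)

theorem potential_bot_le (T : CondVar G) (δ : ℝ) (N : ℕ) :
    T.potential δ N (⊥ : Submodule R G) ≤ (∑ j ∈ Finset.range (N + 1), 2 ^ j) * T.entropy := by
  rw [potential, Finset.sum_mul, Nat.card_unique, Nat.cast_one, log_one, mul_zero, add_zero]
  exact Finset.sum_le_sum fun j _ ↦ (entropy_map_le _ _).trans (T.entropy_iterDouble_le j)

theorem card_comap_mkQ [Finite G] (V : Submodule R G) (W : Submodule R (G ⧸ V)) :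
    Nat.card (W.comap V.mkQ) = Nat.card V * Nat.card W := by
  have : Finite (G ⧸ V) := .of_surjective V.mkQ V.mkQ_surjective
  have index_eq := W.toAddSubgroup.index_comap_of_surjective (f := V.mkQ.toAddMonoidHom)
    V.mkQ_surjective
  have card_comap := (W.toAddSubgroup.comap V.mkQ.toAddMonoidHom).card_mul_index
  have card_G := V.card_eq_card_quotient_mul_card
  rw [index_eq, card_G, ← W.toAddSubgroup.card_mul_index, ← mul_assoc] at card_comap
  exact Nat.eq_of_mul_eq_mul_right
    (Nat.pos_of_ne_zero AddSubgroup.FiniteIndex.index_ne_zero) card_comap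

theorem entropy_map_mkQ_comap (S : CondVar G) (V : Submodule R G) (W : Submodule R (G ⧸ V)) :
    (S.map (W.comap V.mkQ).mkQ).entropy = ((S.map V.mkQ).map W.mkQ).entropy := by
  rw [entropy_map, entropy_map]
  refine congrArg (· - _) (rvEnt_congr _ fun ω ω' ↦ ?_)
  simp only [Prod.mk.injEq, map, Function.comp_apply, Submodule.mkQ_apply, Submodule.Quotient.eq,
    Submodule.mem_comap, map_sub]

theorem potential_comap_lt [Finite G] {T : CondVar G} {δ : ℝ} {N j : ℕ} (hj : j ≤ N)
    {V : Submodule R G} {W : Submodule R (G ⧸ V)}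
    (hW : δ * log (Nat.card W) < ((T.map V.mkQ).iterDouble j).entropy -
      (((T.map V.mkQ).iterDouble j).map W.mkQ).entropy) :
    T.potential δ N (W.comap V.mkQ) < T.potential δ N V := by
  have : Finite (G ⧸ V) := .of_surjective V.mkQ V.mkQ_surjective
  have card_V : (Nat.card V : ℝ) ≠ 0 := Nat.cast_ne_zero.2 Nat.card_pos.ne'
  have card_W : (Nat.card W : ℝ) ≠ 0 := Nat.cast_ne_zero.2 Nat.card_pos.ne'
  let loss (i : ℕ) : ℝ := ((T.iterDouble i).map V.mkQ).entropy -
    ((T.iterDouble i).map (W.comap V.mkQ).mkQ).entropy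
  have loss_nonneg i : 0 ≤ loss i := by
    rw [sub_nonneg, entropy_map_mkQ_comap]
    exact entropy_map_le _ _
  have lt_loss : δ * log (Nat.card W) < loss j := by
    have := map_iterDouble V.mkQ.toAddMonoidHom j T
    change (T.iterDouble j).map V.mkQ = (T.map V.mkQ).iterDouble j at this
    rwa [← this, ← entropy_map_mkQ_comap] at hW
  have loss_le : loss j ≤ ∑ i ∈ Finset.range (N + 1), loss i :=
    Finset.single_le_sum (fun i _ ↦ loss_nonneg i) (Finset.mem_range_succ_iff.2 hj)
  rw [Finset.sum_sub_distrib] at loss_le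
  rw [potential, potential, card_comap_mkQ, Nat.cast_mul, log_mul card_V card_W]
  linarith

theorem exists_submodule_le_entropy_map_add_map [Finite G] [Module (ZMod 2) G] {ε δ : ℝ}
    (hε : 0 < ε) (hδ : 0 < δ) (hδε : 250 * δ ≤ ε ^ 2) {N : ℕ} (hN : 1 < N * δ) (T : CondVar G) :
    ∃ V : Submodule (ZMod 2) G,
      δ * log (Nat.card V) ≤ (∑ j ∈ Finset.range (N + 1), 2 ^ j) * T.entropy ∧
      (2 - ε) * (T.map V.mkQ).entropy ≤ (T.map V.mkQ + T.map V.mkQ).entropy := by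
  obtain ⟨V, hV⟩ := Finite.exists_min (T.potential δ N : Submodule (ZMod 2) G → ℝ)
  have : Finite (G ⧸ V) := .of_surjective V.mkQ V.mkQ_surjective
  refine ⟨V, (T.mul_log_card_le_potential δ N V).trans ((hV ⊥).trans (T.potential_bot_le δ N)), ?_⟩
  set S := T.map V.mkQ
  obtain hS | hS := S.entropy_nonneg.eq_or_lt
  · rw [← hS, mul_zero]
    exact entropy_nonneg _
  by_contra! double_lt
  have double_lt' : (S + S).entropy < (1 + N * δ) * S.entropy := by
    refine (entropy_add_le S S).trans_lt ?_
    rw [← two_mul]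
    exact mul_lt_mul_of_pos_right (by linarith) hS
  obtain ⟨j, hj, W, hW⟩ := exists_iterDouble_submodule hε hδ hδε N hS double_lt.le double_lt'
  exact (hV _).not_gt (potential_comap_lt hj hW)

end CondVar

end Doubling

theorem ent_unifOn {α : Type*} (s : Set α) [Finite s] [Nonempty s] :
    ent (unifOn s) = log (Nat.card s) := by
  classical
  have := Fintype.ofFinite s
  have card_ne : (Nat.card s : ℝ) ≠ 0 := Nat.cast_ne_zero.2 Nat.card_pos.ne'
  have summand a : negMulLog (unifOn s a) =
      s.indicator (fun _ ↦ (Nat.card s : ℝ)⁻¹ * log (Nat.card s)) a := by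
    by_cases ha : a ∈ s <;> simp [unifOn, ha, negMulLog]
  rw [ent, finsum_congr summand, ← finsum_mem_def, ← finsum_set_coe_eq_finsum_mem,
    finsum_eq_sum_of_fintype, Finset.sum_const, Finset.card_univ, ← Nat.card_eq_fintype_card,
    nsmul_eq_mul, mul_inv_cancel_left₀ card_ne]

theorem statement1_general (ε : ℝ) (hε : 0 < ε) :
    ∃ L : ℝ, 0 < L ∧
      ∀ (G : Type u) [AddCommGroup G] [Module (ZMod 2) G] [Finite G] (p q : G → ℝ),
        IsDist p → IsDist q →
        ∃ V : Submodule (ZMod 2) G,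
          ent (unifOn (V : Set G)) ≤ L * (ent p + ent q) ∧
          ent (conv (push V.mkQ p) (push V.mkQ q)) ≥
            ent (push V.mkQ p) + ent (push V.mkQ q) - ε * (ent p + ent q) := by
  let δ := ε ^ 2 / 250
  have hδ : 0 < δ := by positivity
  obtain ⟨N, hN⟩ := exists_nat_gt (1 / δ)
  refine ⟨(∑ j ∈ Finset.range (N + 1), 2 ^ j) / δ, by positivity, fun G _ _ _ p q hp hq ↦ ?_⟩
  have := Fintype.ofFinite G
  have entropy_p := CondVar.entropy_ofLaw p hp.mem_stdSimplex
  have entropy_q := CondVar.entropy_ofLaw q hq.mem_stdSimplex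
  set P := CondVar.ofLaw p hp.mem_stdSimplex
  set Q := CondVar.ofLaw q hq.mem_stdSimplex
  have add_le := P.entropy_add_le Q
  obtain ⟨V, V_le, double_ge⟩ := CondVar.exists_submodule_le_entropy_map_add_map hε hδ
    (mul_div_cancel₀ (ε ^ 2) (by norm_num)).le ((div_lt_iff₀ hδ).1 hN) (P + Q)
  refine ⟨V, ?_, ?_⟩
  · rw [ent_unifOn, div_mul_eq_mul_div, le_div_iff₀' hδ]
    exact V_le.trans (by gcongr; linarith)
  · have : Finite (G ⧸ V) := .of_surjective V.mkQ V.mkQ_surjective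
    have map_le := ((P + Q).entropy_map_le V.mkQ).trans add_le
    have double_le := CondVar.entropy_double_add_le (P.map V.mkQ) (Q.map V.mkQ)
    have map_add : (P + Q).map V.mkQ = P.map V.mkQ + Q.map V.mkQ :=
      CondVar.map_add V.mkQ.toAddMonoidHom P Q
    rw [map_add] at double_ge map_le
    have saving := mul_le_mul_of_nonneg_left map_le hε.le
    have key : (P.map V.mkQ).entropy + (Q.map V.mkQ).entropy - ε * (P.entropy + Q.entropy) ≤
        (P.map V.mkQ + Q.map V.mkQ).entropy := by linarith
    rwa [CondVar.entropy_map_ofLaw, CondVar.entropy_map_ofLaw, entropy_p, entropy_q,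
      CondVar.entropy_map_ofLaw_add_map_ofLaw] at key

/-- For every `ε > 0` there is `L > 0` such that for independent finitely
supported `X, Y` on `𝔽₂ⁿ` there is a subspace `V` with `H[𝐔_V] ≤ L(H[X]+H[Y])` and
`H[π_V(X)+π_V(Y)] ≥ H[π_V(X)] + H[π_V(Y)] − ε(H[X]+H[Y])`. -/
theorem statement1 :
    ∀ ε : ℝ, 0 < ε → ∃ L : ℝ, 0 < L ∧
      ∀ (n : ℕ) (p q : Fvec n → ℝ), IsDist p → IsDist q →
        ∃ V : Submodule (ZMod 2) (Fvec n),
          ent (unifOn (V : Set (Fvec n))) ≤ L * (ent p + ent q) ∧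
          ent (conv (push V.mkQ p) (push V.mkQ q)) ≥
            ent (push V.mkQ p) + ent (push V.mkQ q) - ε * (ent p + ent q) := by
  intro ε hε
  obtain ⟨L, hL, h⟩ := statement1_general ε hε
  exact ⟨L, hL, fun n ↦ h (Fvec n)⟩
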